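/- Let S ⊆ ℂᵐ and X ⊆ ℂⁿ be convex domains and f : S → X a holomorphic map. Assume that τ is a holomorphic automorphism of X which is a generalized translation, and σ is a holomorphic automorphism of S such that τ ∘ f = f ∘ σ. Then σ is also a generalized translation. -/

import Mathlib

open scoped Manifold Topology
open Set Metric Filter

noncomputable section

/-- The complex Euclidean space `ℂⁿ`. -/
abbrev CSpace (n : ℕ) : Type := EuclideanSpace ℂ (Fin n)

/-- The `𝒪(Ω)`-convex hull of a set `K ⊆ Ω`. -/
def OHull {n : ℕ} (Ω K : Set (CSpace n)) : Set (CSpace n) :=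
  {x ∈ Ω | ∀ f : CSpace n → ℂ, DifferentiableOn ℂ f Ω → ‖f x‖ ≤ ⨆ y : K, ‖f ↑y‖}

/-- `τ` is a generalized translation of `Ω`: for every compact `𝒪(Ω)`-convex `K ⊆ Ω` there is
`j ≥ 1` with `τʲ(K) ∩ K = ∅` and `τʲ(K) ∪ K` again `𝒪(Ω)`-convex. -/
def IsGenTranslation {n : ℕ} (Ω : Set (CSpace n)) (τ : CSpace n → CSpace n) : Prop :=
  ∀ K : Set (CSpace n), IsCompact K → K ⊆ Ω → OHull Ω K = K →
    ∃ j : ℕ, 1 ≤ j ∧ (τ^[j] '' K) ∩ K = ∅ ∧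
      OHull Ω ((τ^[j] '' K) ∪ K) = (τ^[j] '' K) ∪ K

/-- The smoothing polynomial `3 x² - 2 x³`, whose iterates improve approximate idempotents. -/
def idemStep {R : Type*} [CommRing R] (x : R) : R := 3 * x ^ 2 - 2 * x ^ 3

lemma idemStep_sq_sub {R : Type*} [CommRing R] (x : R) :
    idemStep x ^ 2 - idemStep x = (4 * (x ^ 2 - x) - 3) * ((x ^ 2 - x) * (x ^ 2 - x)) := by
  unfold idemStep; ring

lemma two_mul_idemStep_sub_one {R : Type*} [CommRing R] (x : R) :
    2 * idemStep x - 1 = (2 * x - 1) - 2 * ((x ^ 2 - x) * (2 * x - 1)) := by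
  unfold idemStep; ring

lemma idemStep_sub_self {R : Type*} [CommRing R] (x : R) :
    idemStep x - x = -((x ^ 2 - x) * (2 * x - 1)) := by
  unfold idemStep; ring

lemma map_iterate_idemStep {R R' : Type*} [CommRing R] [CommRing R'] {F : Type*} [FunLike F R R']
    [RingHomClass F R R'] (g : F) (k : ℕ) (x : R) :
    g (idemStep^[k] x) = idemStep^[k] (g x) := by
  have h : Function.Semiconj g (idemStep : R → R) idemStep := fun y => by
    simp only [idemStep, map_sub, map_mul, map_pow, map_ofNat]
  exact (h.iterate_right k) x

lemma norm_iterate_idemStep_le {δ : ℝ} (hδ : δ ≤ 1 / 4) {w : ℂ} (hw : ‖w‖ ≤ δ) (k : ℕ) :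
    ‖idemStep^[k] w‖ ≤ δ := by
  induction k with
  | zero => simpa
  | succ k ih =>
    rw [Function.iterate_succ_apply']
    set v := idemStep^[k] w
    have h0 := norm_nonneg v
    have : idemStep v = v * (v * (3 - 2 * v)) := by unfold idemStep; ring
    rw [this, norm_mul, norm_mul]
    have h1 : ‖3 - 2 * v‖ ≤ 3 + 2 * ‖v‖ := by
      refine (norm_sub_le _ _).trans ?_
      simp
    have h2 : ‖v‖ * ‖3 - 2 * v‖ ≤ 1 := by nlinarith [norm_nonneg (3 - 2 * v)]
    nlinarith [mul_le_mul_of_nonneg_left h2 h0]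

lemma norm_iterate_idemStep_sub_one_le {δ : ℝ} (hδ : δ ≤ 1 / 4) {w : ℂ} (hw : ‖w - 1‖ ≤ δ)
    (k : ℕ) : ‖idemStep^[k] w - 1‖ ≤ δ := by
  have h : Function.Semiconj (fun v : ℂ => 1 - v) idemStep idemStep := fun v => by
    simp only [idemStep]; ring
  have h' := (h.iterate_right k) w
  rw [norm_sub_rev]
  change ‖1 - idemStep^[k] w‖ ≤ δ
  rw [h']
  exact norm_iterate_idemStep_le hδ (by rwa [norm_sub_rev])  k

section Newton

variable {Q : Type*} [NormedCommRing Q] [NormedAlgebra ℂ Q]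

lemma seminorm_iterate_bounds (ν : Seminorm ℂ Q) (b : Q)
    (hb : ∀ x, ν ((b ^ 2 - b) * x) ≤ 1 / 10 * ν x) (k : ℕ) :
    (∀ x, ν (((idemStep^[k] b) ^ 2 - idemStep^[k] b) * x) ≤ (1 / 2) ^ k / 10 * ν x) ∧
      ν (2 * idemStep^[k] b - 1) ≤ (6 / 5) ^ k * ν (2 * b - 1) := by
  induction k with
  | zero =>
    refine ⟨fun x => ?_, ?_⟩
    · simpa using hb x
    · simp
  | succ k ih =>
    obtain ⟨ih1, ih2⟩ := ih
    rw [Function.iterate_succ_apply']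
    set c := idemStep^[k] b
    have hp : (0 : ℝ) < (1 / 2) ^ k := by positivity
    have hp1 : ((1 : ℝ) / 2) ^ k ≤ 1 := pow_le_one₀ (by norm_num) (by norm_num)
    refine ⟨fun x => ?_, ?_⟩
    · rw [idemStep_sq_sub]
      set y := c ^ 2 - c
      have e : (4 * y - 3) * (y * y) * x
          = (4 : ℂ) • (y * (y * (y * x))) - (3 : ℂ) • (y * (y * x)) := by
        rw [Algebra.smul_def, Algebra.smul_def, map_ofNat, map_ofNat]; ring
      rw [e]
      refine (map_sub_le_add ν _ _).trans ?_
      rw [map_smul_eq_mul, map_smul_eq_mul]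
      have h1 := ih1 x
      have h2 := ih1 (y * x)
      have h3 := ih1 (y * (y * x))
      set q := ((1 : ℝ) / 2) ^ k
      have hn := apply_nonneg ν x
      have h2' : ν (y * (y * x)) ≤ q / 10 * (q / 10 * ν x) :=
        h2.trans (mul_le_mul_of_nonneg_left h1 (by positivity))
      have h3' : ν (y * (y * (y * x))) ≤ q / 10 * (q / 10 * (q / 10 * ν x)) :=
        h3.trans (mul_le_mul_of_nonneg_left h2' (by positivity))
      have e4 : ‖(4 : ℂ)‖ = 4 := by simp
      have e3 : ‖(3 : ℂ)‖ = 3 := by simp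
      rw [e4, e3, pow_succ]
      have hq2 : q * (q * ν x) ≤ q * ν x := by
        have := mul_nonneg hp.le hn
        nlinarith
      have hq3 : q * (q * (q * ν x)) ≤ q * ν x := by
        have := mul_nonneg hp.le hn
        nlinarith
      have := mul_nonneg hp.le hn
      nlinarith
    · rw [two_mul_idemStep_sub_one]
      have e : 2 * ((c ^ 2 - c) * (2 * c - 1)) = (2 : ℂ) • ((c ^ 2 - c) * (2 * c - 1)) := by
        rw [Algebra.smul_def, map_ofNat]
      rw [e]
      refine (map_sub_le_add ν _ _).trans ?_
      rw [map_smul_eq_mul]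
      have h1 := ih1 (2 * c - 1)
      have e2 : ‖(2 : ℂ)‖ = 2 := by simp
      have hn := apply_nonneg ν (2 * c - 1)
      rw [e2, pow_succ (6 / 5 : ℝ)]
      nlinarith [mul_le_mul_of_nonneg_right hp1 hn]

variable [CompleteSpace Q]

/-- The iterates of an approximate idempotent converge geometrically to an idempotent. -/
lemma exists_idempotent_limit (ν : Seminorm ℂ Q) (hν : ∀ x, ‖x‖ ≤ ν x) (b : Q)
    (hb : ∀ x, ν ((b ^ 2 - b) * x) ≤ 1 / 10 * ν x) :
    ∃ e : Q, e * e = e ∧ Tendsto (fun k => idemStep^[k] b) atTop (𝓝 e) ∧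
      ∀ k, ‖idemStep^[k] b - e‖ ≤ ν (2 * b - 1) * (3 / 5) ^ k := by
  have hd : ∀ k, dist (idemStep^[k] b) (idemStep^[k + 1] b)
      ≤ (ν (2 * b - 1) / 10) * (3 / 5) ^ k := fun k => by
    obtain ⟨h1, h2⟩ := seminorm_iterate_bounds ν b hb k
    rw [dist_comm, dist_eq_norm, Function.iterate_succ_apply', idemStep_sub_self, norm_neg]
    refine (hν _).trans ((h1 _).trans ?_)
    refine (mul_le_mul_of_nonneg_left h2 (by positivity)).trans (le_of_eq ?_)
    rw [show (3 / 5 : ℝ) = 1 / 2 * (6 / 5) by norm_num, mul_pow]; ring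
  obtain ⟨e, he⟩ := cauchySeq_tendsto_of_complete
    (cauchySeq_of_le_geometric (3 / 5) _ (by norm_num) hd)
  refine ⟨e, ?_, he, fun k => ?_⟩
  · have l1 : Tendsto (fun k => (idemStep^[k] b) ^ 2 - idemStep^[k] b) atTop (𝓝 (e ^ 2 - e)) :=
      (he.pow 2).sub he
    have l2 : Tendsto (fun k => (idemStep^[k] b) ^ 2 - idemStep^[k] b) atTop (𝓝 0) := by
      refine squeeze_zero_norm (a := fun k : ℕ => ((1 : ℝ) / 2) ^ k * (ν 1 / 10)) (fun k => ?_) ?_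
      · have := (seminorm_iterate_bounds ν b hb k).1 1
        rw [mul_one] at this
        refine (hν _).trans (this.trans (le_of_eq (by ring)))
      · simpa using (tendsto_pow_atTop_nhds_zero_of_lt_one (r := (1 : ℝ) / 2) (by norm_num)
          (by norm_num)).mul_const (ν 1 / 10)
    have := tendsto_nhds_unique l1 l2
    rw [sub_eq_zero, sq] at this
    exact this
  · have := dist_le_of_le_geometric_of_tendsto (3 / 5) _ (by norm_num) hd he k
    rw [dist_eq_norm] at this
    refine this.trans ?_
    have h0 : 0 ≤ ν (2 * b - 1) * (3 / 5) ^ k := by positivity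
    rw [show (1 : ℝ) - 3 / 5 = 2 / 5 by norm_num]
    linarith

open WeakDual

lemma idempotent_eq_of_character_norm_sub_lt {e e' : Q} (he : e * e = e) (he' : e' * e' = e')
    (h : ∀ φ : characterSpace ℂ Q, ‖φ e - φ e'‖ < 1) : e = e' := by
  have hu : IsUnit (1 - (e - e') ^ 2) := by
    by_contra hn
    obtain ⟨φ, hφ⟩ := CharacterSpace.exists_apply_eq_zero hn
    rw [map_sub, map_one, map_pow, map_sub, sub_eq_zero] at hφ
    have h1 := h φ
    have h2 : ‖φ e - φ e'‖ ^ 2 = 1 := by rw [← norm_pow, ← hφ, norm_one]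
    nlinarith [norm_nonneg (φ e - φ e')]
  have h0 : (1 - (e - e') ^ 2) * (e - e') = 0 := by
    linear_combination (-e - 1 + 3 * e') * he + (e' + 1 - 3 * e) * he'
  exact sub_eq_zero.1 (hu.mul_right_eq_zero.1 h0)

/-- Two approximate idempotents with nearby Gelfand transforms have close iterates. -/
lemma norm_iterate_sub_iterate_le {b b' : Q} {C : ℝ} (hb : ‖b ^ 2 - b‖ ≤ 1 / 10)
    (hb' : ‖b' ^ 2 - b'‖ ≤ 1 / 10) (hC : ‖2 * b - 1‖ ≤ C) (hC' : ‖2 * b' - 1‖ ≤ C)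
    (h : ∀ φ : characterSpace ℂ Q,
      (‖φ b‖ ≤ 1 / 4 ∧ ‖φ b'‖ ≤ 1 / 4) ∨ (‖φ b - 1‖ ≤ 1 / 4 ∧ ‖φ b' - 1‖ ≤ 1 / 4)) (k : ℕ) :
    ‖idemStep^[k] b - idemStep^[k] b'‖ ≤ 2 * C * (3 / 5) ^ k := by
  have key : ∀ a : Q, ‖a‖ ≤ 1 / 10 → ∀ x, normSeminorm ℂ Q (a * x) ≤ 1 / 10 * normSeminorm ℂ Q x :=
    fun a ha x => (norm_mul_le a x).trans (mul_le_mul_of_nonneg_right ha (norm_nonneg x))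
  obtain ⟨e, he, hlim, hd⟩ := exists_idempotent_limit (normSeminorm ℂ Q) (fun x => le_rfl) b
    (key _ hb)
  obtain ⟨e', he', hlim', hd'⟩ := exists_idempotent_limit (normSeminorm ℂ Q) (fun x => le_rfl) b'
    (key _ hb')
  have hee : e = e' := by
    refine idempotent_eq_of_character_norm_sub_lt he he' fun φ => ?_
    have l : Tendsto (fun k => ‖φ (idemStep^[k] b) - φ (idemStep^[k] b')‖) atTop
        (𝓝 ‖φ e - φ e'‖) :=
      ((((map_continuous φ).tendsto e).comp hlim).sub
        (((map_continuous φ).tendsto e').comp hlim')).norm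
    refine lt_of_le_of_lt (le_of_tendsto' l (b := 1 / 2) fun k => ?_) (by norm_num)
    rw [map_iterate_idemStep φ, map_iterate_idemStep φ]
    rcases h φ with ⟨h1, h2⟩ | ⟨h1, h2⟩
    · refine (norm_sub_le _ _).trans ?_
      linarith [norm_iterate_idemStep_le le_rfl h1 k, norm_iterate_idemStep_le le_rfl h2 k]
    · have := norm_sub_le (idemStep^[k] (φ b) - 1) (idemStep^[k] (φ b') - 1)
      rw [sub_sub_sub_cancel_right] at this
      linarith [norm_iterate_idemStep_sub_one_le le_rfl h1 k,
        norm_iterate_idemStep_sub_one_le le_rfl h2 k]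
  have h1 := hd k
  have h2 := hd' k
  rw [← hee] at h2
  have h3 := norm_sub_le (idemStep^[k] b - e) (idemStep^[k] b' - e)
  rw [sub_sub_sub_cancel_right] at h3
  have h4 : normSeminorm ℂ Q (2 * b - 1) ≤ C := hC
  have h5 : normSeminorm ℂ Q (2 * b' - 1) ≤ C := hC'
  have hp : (0 : ℝ) ≤ (3 / 5) ^ k := by positivity
  nlinarith [mul_le_mul_of_nonneg_right h4 hp, mul_le_mul_of_nonneg_right h5 hp]

/-- An element whose powers are eventually small admits an equivalent seminorm for which
multiplication by it is a strict contraction. -/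
lemma exists_seminorm_contraction (y : Q)
    (hy : ∀ φ : characterSpace ℂ Q, ‖φ y‖ ≤ 1 / 20) :
    ∃ ν : Seminorm ℂ Q, (∀ x, ‖x‖ ≤ ν x) ∧ ∀ x, ν (y * x) ≤ 1 / 10 * ν x := by
  obtain ⟨m, hm0, hm⟩ : ∃ m : ℕ, m ≠ 0 ∧ ‖y ^ m‖ ≤ (1 / 10) ^ m := by
    have hr : spectralRadius ℂ y ≤ ENNReal.ofReal (1 / 20) := by
      refine iSup₂_le fun w hw => ?_
      obtain ⟨φ, hφ⟩ := CharacterSpace.mem_spectrum_iff_exists.1 hw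
      rw [← hφ, ← enorm_eq_nnnorm, ← ofReal_norm]
      exact ENNReal.ofReal_le_ofReal (hy φ)
    have hlt : spectralRadius ℂ y < ENNReal.ofReal (1 / 10) :=
      hr.trans_lt ((ENNReal.ofReal_lt_ofReal_iff (by norm_num)).2 (by norm_num))
    obtain ⟨m, hm, hm1⟩ := (((spectrum.pow_norm_pow_one_div_tendsto_nhds_spectralRadius y).eventually
      (gt_mem_nhds hlt)).and (eventually_ge_atTop 1)).exists
    refine ⟨m, by omega, ?_⟩
    have h1 := (ENNReal.ofReal_lt_ofReal_iff (by norm_num)).1 hm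
    have h2 := pow_le_pow_left₀ (by positivity) h1.le m
    rwa [one_div, Real.rpow_inv_natCast_pow (norm_nonneg _) (by omega)] at h2
  have hsum : ∀ (p : ℕ → Seminorm ℂ Q) (x : Q),
      (∑ i ∈ Finset.range m, p i) x = ∑ i ∈ Finset.range m, p i x := fun p x => by
    generalize m = m'
    induction m' with
    | zero => simp
    | succ k ih => rw [Finset.sum_range_succ, Finset.sum_range_succ, add_apply, ih]
  refine ⟨∑ i ∈ Finset.range m, ((10 : NNReal) ^ i) •
    (normSeminorm ℂ Q).comp (LinearMap.mulLeft ℂ (y ^ i)), fun x => ?_, fun x => ?_⟩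
  · rw [hsum]
    refine le_trans (le_of_eq ?_) (Finset.single_le_sum (f := fun i => (((10 : NNReal) ^ i) •
      (normSeminorm ℂ Q).comp (LinearMap.mulLeft ℂ (y ^ i))) x)
      (fun i _ => apply_nonneg _ _) (Finset.mem_range.2 (Nat.pos_of_ne_zero hm0)))
    simp
  · rw [hsum, hsum]
    have e : ∀ i (x : Q), (((10 : NNReal) ^ i) •
      (normSeminorm ℂ Q).comp (LinearMap.mulLeft ℂ (y ^ i))) x = 10 ^ i * ‖y ^ i * x‖ := by
      intro i x
      simp [NNReal.smul_def]
    simp_rw [e]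
    set a : ℕ → ℝ := fun i => 10 ^ i * ‖y ^ i * x‖ with ha
    have e2 : ∀ i, 10 ^ i * ‖y ^ i * (y * x)‖ = 1 / 10 * a (i + 1) := by
      intro i
      simp only [ha, pow_succ, mul_assoc]; ring
    simp_rw [e2, ← Finset.mul_sum]
    refine mul_le_mul_of_nonneg_left ?_ (by norm_num)
    have h1 := Finset.sum_range_succ a m
    rw [Finset.sum_range_succ'] at h1
    have h2 : a m ≤ a 0 := by
      simp only [ha, pow_zero, one_mul]
      have : ‖y ^ m * x‖ ≤ (1 / 10) ^ m * ‖x‖ :=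
        (norm_mul_le _ _).trans (mul_le_mul_of_nonneg_right hm (norm_nonneg x))
      calc (10 : ℝ) ^ m * ‖y ^ m * x‖ ≤ 10 ^ m * ((1 / 10) ^ m * ‖x‖) :=
            mul_le_mul_of_nonneg_left this (by positivity)
        _ = ‖x‖ := by rw [← mul_assoc, ← mul_pow]; norm_num
    linarith

/-- An element whose Gelfand transform is close to the indicator of `V` can be replaced by an
idempotent whose Gelfand transform equals that indicator. -/
lemma exists_idempotent_of_approx (V : Set (characterSpace ℂ Q)) (b : Q)
    (hV : ∀ φ ∈ V, ‖φ b - 1‖ ≤ 1 / 25) (hV' : ∀ φ ∉ V, ‖φ b‖ ≤ 1 / 25) :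
    ∃ e : Q, e * e = e ∧ (∀ φ ∈ V, φ e = 1) ∧ ∀ φ ∉ V, φ e = 0 := by
  obtain ⟨ν, hν, hc⟩ := exists_seminorm_contraction (b ^ 2 - b) (fun φ => by
    have e1 : φ (b ^ 2 - b) = φ b * (φ b - 1) := by
      rw [map_sub, map_pow]; ring
    rw [e1, norm_mul]
    by_cases hφ : φ ∈ V
    · have h1 := hV φ hφ
      have h2 : ‖φ b‖ ≤ 1 + 1 / 25 := by
        have := norm_add_le (φ b - 1) 1
        rw [sub_add_cancel, norm_one] at this
        linarith
      nlinarith [norm_nonneg (φ b - 1), norm_nonneg (φ b)]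
    · have h1 := hV' φ hφ
      have h2 : ‖φ b - 1‖ ≤ 1 + 1 / 25 := by
        have := norm_sub_le (φ b) 1
        rw [norm_one] at this
        linarith
      nlinarith [norm_nonneg (φ b - 1), norm_nonneg (φ b)])
  obtain ⟨e, he, hlim, -⟩ := exists_idempotent_limit ν hν b hc
  have hval : ∀ φ : characterSpace ℂ Q, φ e = 0 ∨ φ e = 1 := fun φ => by
    have : φ e * φ e = φ e := by rw [← map_mul, he]
    have : φ e * (φ e - 1) = 0 := by linear_combination this
    rcases mul_eq_zero.1 this with h | h
    · exact Or.inl h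
    · exact Or.inr (sub_eq_zero.1 h)
  have hl : ∀ φ : characterSpace ℂ Q, Tendsto (fun k => idemStep^[k] (φ b)) atTop (𝓝 (φ e)) :=
    fun φ => by
      have := ((map_continuous φ).tendsto e).comp hlim
      refine this.congr fun k => ?_
      exact map_iterate_idemStep φ k b
  refine ⟨e, he, fun φ hφ => (hval φ).resolve_left fun h0 => ?_,
    fun φ hφ => (hval φ).resolve_right fun h1 => ?_⟩
  · have := le_of_tendsto' ((hl φ).sub_const 1).norm
      (fun k => norm_iterate_idemStep_sub_one_le (by norm_num) (hV φ hφ) k)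
    rw [h0] at this
    norm_num at this
  · have := le_of_tendsto' (hl φ).norm
      (fun k => norm_iterate_idemStep_le (by norm_num) (hV' φ hφ) k)
    rw [h1] at this
    norm_num at this

end Newton

section CauchyPompeiu

open MeasureTheory Complex

/-- The Wirtinger derivative `∂g/∂w̄`. -/
def dbar (g : ℂ → ℂ) (w : ℂ) : ℂ := (1 / 2) * (fderiv ℝ g w 1 + I * fderiv ℝ g w I)

lemma dbar_polar (L : ℂ →L[ℝ] ℂ) (θ : ℝ) :
    L (exp (θ * I)) + I * L (I * exp (θ * I)) = exp (-(θ * I)) * (L 1 + I * L I) := by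
  have h1 : exp (θ * I) = (Real.cos θ : ℝ) • (1 : ℂ) + (Real.sin θ : ℝ) • I := by
    rw [exp_mul_I]; simp
  have h2 : I * exp (θ * I) = (Real.cos θ : ℝ) • I + (-Real.sin θ : ℝ) • (1 : ℂ) := by
    rw [h1]; simp only [real_smul, ofReal_neg]; linear_combination (Real.sin θ : ℂ) * I_mul_I
  have h3 : exp (-(θ * I)) = Real.cos θ - Real.sin θ * I := by
    rw [← neg_mul, exp_mul_I]; simp [Complex.cos_neg, Complex.sin_neg, sub_eq_add_neg]
  rw [h2, h1, map_add, map_add, map_smul, map_smul, map_smul, map_smul, h3]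
  simp only [real_smul, ofReal_neg]
  linear_combination (Real.sin θ : ℂ) * L I * I_mul_I

lemma integral_dbar_div_self {g : ℂ → ℂ} (hg : ContDiff ℝ 1 g) (hs : HasCompactSupport g) :
    ∫ w, dbar g w / w = -Real.pi * g 0 := by
  obtain ⟨R, hR⟩ : ∃ R : ℝ, ∀ w, R ≤ ‖w‖ → g w = 0 := by
    obtain ⟨R, hR⟩ := hs.isCompact.isBounded.subset_ball 0
    refine ⟨R, fun w hw => image_eq_zero_of_notMem_tsupport fun h => ?_⟩
    have := hR h
    rw [mem_ball_zero_iff] at this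
    linarith
  have hR' : ∀ w, R < ‖w‖ → fderiv ℝ g w = 0 := fun w hw => by
    have : g =ᶠ[𝓝 w] fun _ => 0 := by
      filter_upwards [continuous_norm.continuousAt.eventually (lt_mem_nhds hw)] with v hv
      exact hR v hv.le
    rw [this.fderiv_eq]; simp
  have hgd : Differentiable ℝ g := hg.differentiable (by norm_num)
  have hgc : Continuous (fderiv ℝ g) := hg.continuous_fderiv (by norm_num)
  set A : ℝ × ℝ → ℂ := fun p => fderiv ℝ g (p.1 * exp (p.2 * I)) (exp (p.2 * I)) with hA
  set B : ℝ × ℝ → ℂ := fun p => fderiv ℝ g (p.1 * exp (p.2 * I)) (I * exp (p.2 * I)) with hB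
  have hAc : Continuous A := by
    apply Continuous.clm_apply
    · exact hgc.comp (by fun_prop)
    · fun_prop
  have hBc : Continuous B := by
    apply Continuous.clm_apply
    · exact hgc.comp (by fun_prop)
    · fun_prop
  have hcInt : ∀ F : ℝ × ℝ → ℂ, Continuous F → (∀ p : ℝ × ℝ, R < p.1 → 0 < p.1 → F p = 0) →
      IntegrableOn F (Ioi (0 : ℝ) ×ˢ Ioo (-Real.pi) Real.pi) := fun F hF h0 => by
    refine IntegrableOn.of_forall_sdiff_eq_zero (s := Icc (0 : ℝ) R ×ˢ Icc (-Real.pi) Real.pi)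
      (hF.continuousOn.integrableOn_compact (isCompact_Icc.prod isCompact_Icc))
      (measurableSet_Ioi.prod measurableSet_Ioo) ?_
    rintro ⟨r, θ⟩ ⟨⟨h1, h2⟩, h3⟩
    refine h0 _ ?_ h1
    by_contra hlt
    exact h3 ⟨⟨le_of_lt h1, not_lt.1 hlt⟩, Ioo_subset_Icc_self h2⟩
  have hnorm : ∀ p : ℝ × ℝ, 0 < p.1 → ‖(p.1 : ℂ) * exp (p.2 * I)‖ = p.1 := fun p hp => by
    rw [norm_mul, norm_exp_ofReal_mul_I, mul_one, norm_real, Real.norm_of_nonneg hp.le]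
  have hAi := hcInt A hAc fun p h1 h2 => by
    simp only [hA]; rw [hR' _ (by rwa [hnorm p h2])]; simp
  have hBi := hcInt B hBc fun p h1 h2 => by
    simp only [hB]; rw [hR' _ (by rwa [hnorm p h2])]; simp
  have hA0 : ∫ p in Ioi (0 : ℝ) ×ˢ Ioo (-Real.pi) Real.pi, A p = -(2 * Real.pi) * g 0 := by
    rw [Measure.volume_eq_prod, ← Measure.prod_restrict, integral_prod_symm]
    · have : ∀ θ : ℝ, ∫ r in Ioi (0 : ℝ), A (r, θ) = - g 0 := fun θ => by
        have hd : ∀ r : ℝ, HasDerivAt (fun r : ℝ => g (r * exp (θ * I))) (A (r, θ)) r := fun r => by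
          refine ((hgd _).hasFDerivAt).comp_hasDerivAt r ?_
          simpa using (ofRealCLM.hasDerivAt (x := r)).mul_const (exp (θ * I))
        have hcs : HasCompactSupport (fun r : ℝ => g (r * exp (θ * I))) := by
          refine HasCompactSupport.of_support_subset_isCompact (isCompact_closedBall 0 R)
            fun r hr => ?_
          rw [mem_closedBall_zero_iff]
          by_contra hlt
          refine hr (hR _ ?_)
          rw [norm_mul, norm_exp_ofReal_mul_I, mul_one, norm_real]
          exact (not_le.1 hlt).le
        have hcd : ContDiff ℝ 1 (fun r : ℝ => g (r * exp (θ * I))) :=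
          hg.comp ((ofRealCLM.contDiff).mul contDiff_const)
        have := hcs.integral_Ioi_deriv_eq hcd 0
        simp only [(hd _).deriv] at this
        simpa using this
      simp_rw [this]
      rw [integral_const]
      simp
      left
      rw [max_eq_left (by positivity)]; push_cast; ring
    · rwa [IntegrableOn, Measure.volume_eq_prod, ← Measure.prod_restrict] at hAi
  have hB0 : ∫ p in Ioi (0 : ℝ) ×ˢ Ioo (-Real.pi) Real.pi, B p = 0 := by
    rw [Measure.volume_eq_prod, setIntegral_prod _ hBi]
    refine setIntegral_eq_zero_of_forall_eq_zero fun r hr => ?_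
    rw [← integral_Ioc_eq_integral_Ioo, ← intervalIntegral.integral_of_le (by
      linarith [Real.pi_pos])]
    have hd : ∀ θ : ℝ, HasDerivAt (fun θ : ℝ => g (r * exp (θ * I))) (r * B (r, θ)) θ := fun θ => by
      have h1 : HasDerivAt (fun θ : ℝ => (r : ℂ) * exp (θ * I)) (r • (I * exp (θ * I))) θ := by
        have := ((((ofRealCLM.hasDerivAt (x := θ)).mul_const I).cexp).const_mul (r : ℂ))
        refine this.congr_deriv ?_
        simp only [real_smul, ofRealCLM_apply, ofReal_one, one_mul]; ring
      have h2 := ((hgd _).hasFDerivAt).comp_hasDerivAt θ h1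
      rw [map_smul, real_smul] at h2
      exact h2
    have hr0 : (r : ℂ) ≠ 0 := by exact_mod_cast (ne_of_gt hr)
    have h1 := intervalIntegral.integral_eq_sub_of_hasDerivAt (a := -Real.pi) (b := Real.pi)
      (fun θ _ => hd θ) (Continuous.intervalIntegrable (by fun_prop) _ _)
    rw [intervalIntegral.integral_const_mul] at h1
    have h2 : exp ((Real.pi : ℝ) * I) = exp (((-Real.pi : ℝ) : ℂ) * I) := by
      rw [exp_mul_I, exp_mul_I, ← ofReal_cos, ← ofReal_sin, ← ofReal_cos, ← ofReal_sin]
      simp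
    rw [h2, sub_self] at h1
    exact (mul_eq_zero.1 h1).resolve_left hr0
  rw [← Complex.integral_comp_polarCoord_symm]
  have hcongr : ∫ p in polarCoord.target, p.1 • (dbar g (Complex.polarCoord.symm p)
      / Complex.polarCoord.symm p)
      = ∫ p in Ioi (0 : ℝ) ×ˢ Ioo (-Real.pi) Real.pi, ((1 / 2) * A p + (1 / 2) * (I * B p)) := by
    refine setIntegral_congr_fun (measurableSet_Ioi.prod measurableSet_Ioo) fun p hp => ?_
    have hp0 : (p.1 : ℂ) ≠ 0 := by exact_mod_cast (ne_of_gt hp.1)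
    have e : Complex.polarCoord.symm p = p.1 * exp (p.2 * I) := by
      rw [Complex.polarCoord_symm_apply, exp_mul_I]; simp
    simp only [e, hA, hB]
    rw [← mul_add, dbar_polar, dbar, real_smul, exp_neg]
    have := exp_ne_zero (p.2 * I)
    field_simp
  rw [hcongr, integral_add (hAi.const_mul _) ((hBi.const_mul _).const_mul _),
    integral_const_mul, integral_const_mul, integral_const_mul, hA0, hB0]
  ring

/-- The Cauchy–Pompeiu formula for compactly supported functions. -/
lemma integral_dbar_div_sub {g : ℂ → ℂ} (hg : ContDiff ℝ 1 g) (hs : HasCompactSupport g) (a : ℂ) :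
    ∫ w, dbar g w / (w - a) = -Real.pi * g a := by
  have h := integral_dbar_div_self (g := fun w => g (w + a)) (hg.comp (by fun_prop))
    (hs.comp_homeomorph (Homeomorph.addRight a))
  rw [zero_add] at h
  rw [← h, ← integral_add_right_eq_self _ a]
  refine integral_congr_ae (Eventually.of_forall fun w => ?_)
  simp only [dbar, fderiv_comp_add_right, add_sub_cancel_right]

lemma integrableOn_ball_norm_inv (R : ℝ) :
    IntegrableOn (fun w : ℂ => ‖w‖⁻¹) (ball 0 R) := by
  have h := (integrable_fun_norm_addHaar (E := ℂ) volume
    (f := indicator (Iio R) fun r : ℝ => r⁻¹)).2 ?_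
  · rw [← integrable_indicator_iff measurableSet_ball]
    refine h.congr (Eventually.of_forall fun w => ?_)
    simp [indicator]
  · rw [finrank_real_complex]
    refine IntegrableOn.of_forall_sdiff_eq_zero (s := Ioo 0 R)
      (IntegrableOn.congr_fun (f := fun _ => (1 : ℝ)) (by simp) ?_ measurableSet_Ioo)
      measurableSet_Ioi ?_
    · intro r hr
      have : r ≠ 0 := ne_of_gt hr.1
      simp [indicator, hr.2, this]
    · intro r hr
      have : ¬ r < R := fun h => hr.2 ⟨hr.1, h⟩
      simp [indicator, this]

lemma integrableOn_ball_norm_sub_inv (a : ℂ) (R : ℝ) :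
    IntegrableOn (fun w : ℂ => ‖w - a‖⁻¹) (ball a R) ∧
      ∫ w in ball a R, ‖w - a‖⁻¹ = ∫ w in ball (0 : ℂ) R, ‖w‖⁻¹ := by
  have hp : MeasurePreserving (fun w : ℂ => w - a) volume volume := measurePreserving_sub_right _ a
  have he : MeasurableEmbedding (fun w : ℂ => w - a) := measurableEmbedding_subRight a
  have hs : (fun w : ℂ => w - a) ⁻¹' ball 0 R = ball a R := by
    ext w; simp [dist_eq_norm]
  constructor
  · rw [← hs]
    exact (hp.integrableOn_comp_preimage he).2 (integrableOn_ball_norm_inv R)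
  · rw [← hs]
    exact hp.setIntegral_preimage_emb he (fun w => ‖w‖⁻¹) _

lemma continuous_dbar {g : ℂ → ℂ} (hg : ContDiff ℝ 1 g) : Continuous (dbar g) := by
  have hgc : Continuous (fderiv ℝ g) := hg.continuous_fderiv (by norm_num)
  unfold dbar
  fun_prop

lemma dbar_eq_zero_of_notMem_tsupport {g : ℂ → ℂ} {w : ℂ} (hw : w ∉ tsupport g) :
    dbar g w = 0 := by
  have h := notMem_tsupport_iff_eventuallyEq.1 hw
  rw [dbar, h.fderiv_eq]
  simp

lemma dbar_eq_zero_of_eventuallyEq_const {g : ℂ → ℂ} {w c : ℂ} (hw : g =ᶠ[𝓝 w] fun _ => c) :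
    dbar g w = 0 := by
  rw [dbar, hw.fderiv_eq]
  simp

lemma dbar_sum_mul {ι : Type*} [Fintype ι] {u : ι → ℂ → ℂ} (hu : ∀ i, Differentiable ℝ (u i))
    (c : ι → ℂ) (w : ℂ) :
    dbar (fun w => ∑ i, u i w * c i) w = ∑ i, dbar (u i) w * c i := by
  have h : HasFDerivAt (fun w => ∑ i, u i w * c i)
      (∑ i, (c i) • fderiv ℝ (u i) w) w :=
    HasFDerivAt.fun_sum fun i _ => ((hu i w).hasFDerivAt).mul_const (c i)
  rw [dbar, h.fderiv]
  simp only [dbar, _root_.sum_apply, _root_.smul_apply, smul_eq_mul,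
    Finset.mul_sum, ← Finset.sum_add_distrib]
  exact Finset.sum_congr rfl fun i _ => by ring

/-- If the `∂̄`-derivative of `g` is nearly divisible by `a - w`, then the normalised area integral
of the quotient nearly recovers `g a`. -/
lemma norm_sub_integral_le {g G : ℂ → ℂ} (hg : ContDiff ℝ 1 g) (hG : Continuous G) {R δ : ℝ}
    (hs : tsupport g ⊆ ball 0 R) {a : ℂ} (ha : a ∈ ball (0 : ℂ) R) (hδ : 0 ≤ δ)
    (h : ∀ w, ‖dbar g w - (a - w) * G w‖ ≤ δ) :
    ‖g a - (Real.pi : ℂ)⁻¹ * ∫ w in ball 0 R, G w‖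
      ≤ Real.pi⁻¹ * (δ * ∫ w in ball (0 : ℂ) (2 * R), ‖w‖⁻¹) := by
  have hcs : HasCompactSupport g :=
    (isCompact_closedBall (0 : ℂ) R).of_isClosed_subset (isClosed_tsupport g)
      (hs.trans ball_subset_closedBall)
  have hsub : ball (0 : ℂ) R ⊆ ball a (2 * R) := fun w hw => by
    rw [mem_ball, dist_eq_norm]
    rw [mem_ball_zero_iff] at hw ha
    linarith [norm_sub_le w a]
  obtain ⟨hi, hie⟩ := integrableOn_ball_norm_sub_inv a (2 * R)
  have hi' := hi.mono_set hsub
  have hGi : IntegrableOn G (ball 0 R) :=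
    (hG.continuousOn.integrableOn_compact (isCompact_closedBall 0 R)).mono_set
      ball_subset_closedBall
  have hdc := continuous_dbar hg
  have hdi : IntegrableOn (fun w => dbar g w / (w - a)) (ball 0 R) := by
    obtain ⟨M, hM⟩ := (isCompact_closedBall (0 : ℂ) R).exists_bound_of_continuousOn hdc.continuousOn
    refine Integrable.mono' (hi'.const_mul M) ?_ ?_
    · exact (hdc.measurable.div (measurable_id.sub_const a)).aestronglyMeasurable
    · refine (ae_restrict_iff' measurableSet_ball).2 (Eventually.of_forall fun w hw => ?_)
      rw [norm_div, div_eq_mul_inv]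
      exact mul_le_mul_of_nonneg_right (hM w (ball_subset_closedBall hw)) (by positivity)
  have hP := integral_dbar_div_sub hg hcs a
  rw [← setIntegral_eq_integral_of_forall_compl_eq_zero (s := ball 0 R) (fun w hw => by
    rw [dbar_eq_zero_of_notMem_tsupport (fun h => hw (hs h)), zero_div])] at hP
  have hpi : (Real.pi : ℂ) ≠ 0 := by exact_mod_cast Real.pi_ne_zero
  have e : g a - (Real.pi : ℂ)⁻¹ * ∫ w in ball 0 R, G w
      = -((Real.pi : ℂ)⁻¹ * ∫ w in ball 0 R, (dbar g w / (w - a) + G w)) := by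
    rw [integral_add hdi hGi, hP]
    field_simp
    ring
  rw [e, norm_neg, norm_mul, norm_inv, norm_real, Real.norm_of_nonneg Real.pi_pos.le]
  refine mul_le_mul_of_nonneg_left ?_ (inv_nonneg.2 Real.pi_pos.le)
  calc ‖∫ w in ball 0 R, (dbar g w / (w - a) + G w)‖
      ≤ ∫ w in ball 0 R, δ * ‖w - a‖⁻¹ := by
        refine norm_integral_le_of_norm_le (hi'.const_mul δ) ?_
        refine ae_restrict_of_ae ?_
        have : ∀ᵐ w : ℂ, w ≠ a := by
          rw [ae_iff]; simp
        filter_upwards [this] with w hw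
        have hw' : w - a ≠ 0 := sub_ne_zero.2 hw
        have : dbar g w / (w - a) + G w = (dbar g w - (a - w) * G w) / (w - a) := by
          field_simp; ring
        rw [this, norm_div, div_eq_mul_inv]
        exact mul_le_mul_of_nonneg_right (h w) (by positivity)
    _ ≤ ∫ w in ball a (2 * R), δ * ‖w - a‖⁻¹ :=
        setIntegral_mono_set (hi.const_mul δ)
          (Eventually.of_forall fun w => by simp only [Pi.zero_apply]; positivity)
          (LE.le.eventuallyLE hsub)
    _ = δ * ∫ w in ball (0 : ℂ) (2 * R), ‖w‖⁻¹ := by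
        rw [integral_const_mul, hie]

end CauchyPompeiu

section Shilov

open WeakDual

variable {B : Type*} [NormedCommRing B] [NormedAlgebra ℂ B]

/-- The closed ideal generated by `z - ζ`. -/
def evalIdeal (z : B) (ζ : ℂ) : Ideal B := (Ideal.span {z - algebraMap ℂ B ζ}).closure

instance isClosed_evalIdeal (z : B) (ζ : ℂ) : IsClosed (evalIdeal z ζ : Set B) := by
  rw [evalIdeal, Ideal.coe_closure]; exact isClosed_closure

lemma mem_evalIdeal_iff {z a : B} {ζ : ℂ} :
    a ∈ evalIdeal z ζ ↔ ∀ ε > 0, ∃ c, ‖a - (z - algebraMap ℂ B ζ) * c‖ < ε := by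
  rw [← SetLike.mem_coe, evalIdeal, Ideal.coe_closure, Metric.mem_closure_iff]
  simp only [SetLike.mem_coe, Ideal.mem_span_singleton', dist_eq_norm]
  refine forall₂_congr fun ε _ => ⟨?_, ?_⟩
  · rintro ⟨_, ⟨c, rfl⟩, h⟩
    exact ⟨c, by rwa [mul_comm] at h⟩
  · rintro ⟨c, h⟩
    exact ⟨_, ⟨c, rfl⟩, by rwa [mul_comm] at h⟩

lemma sub_algebraMap_mem_evalIdeal (z : B) (ζ : ℂ) : z - algebraMap ℂ B ζ ∈ evalIdeal z ζ :=
  mem_evalIdeal_iff.2 fun ε hε => ⟨1, by simpa using hε⟩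

lemma exists_norm_sub_mul_lt {z a : B} {ζ : ℂ} {ε : ℝ}
    (h : ‖Ideal.Quotient.mk (evalIdeal z ζ) a‖ < ε) :
    ∃ c, ‖a - (z - algebraMap ℂ B ζ) * c‖ < ε := by
  obtain ⟨a', ha', hn⟩ := Ideal.Quotient.norm_mk_lt (Ideal.Quotient.mk (evalIdeal z ζ) a)
    (half_pos (sub_pos.2 h))
  obtain ⟨c, hc⟩ := mem_evalIdeal_iff.1 (Ideal.Quotient.eq.1 ha'.symm) _ (half_pos (sub_pos.2 h))
  refine ⟨c, ?_⟩
  calc _ = ‖(a - a' - (z - algebraMap ℂ B ζ) * c) + a'‖ := by congr 1; ring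
    _ ≤ _ := norm_add_le _ _
    _ < ε := by linarith

lemma norm_mk_le_norm_sub_mul (z a c : B) (ζ : ℂ) :
    ‖Ideal.Quotient.mk (evalIdeal z ζ) a‖ ≤ ‖a - (z - algebraMap ℂ B ζ) * c‖ := by
  have : Ideal.Quotient.mk (evalIdeal z ζ) a
      = Ideal.Quotient.mk (evalIdeal z ζ) (a - (z - algebraMap ℂ B ζ) * c) := by
    rw [Ideal.Quotient.eq]
    simpa using Ideal.mul_mem_right c _ (sub_algebraMap_mem_evalIdeal z ζ)
  rw [this]
  exact Ideal.Quotient.norm_mk_le _ _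

lemma continuous_character_apply (a : B) : Continuous fun φ : characterSpace ℂ B => φ a :=
  (WeakDual.eval_continuous a).comp continuous_subtype_val

lemma character_mk_evalIdeal {z : B} {ζ : ℂ} (φ : characterSpace ℂ (B ⧸ evalIdeal z ζ)) :
    φ (Ideal.Quotient.mk (evalIdeal z ζ) z) = ζ := by
  have h : Ideal.Quotient.mk (evalIdeal z ζ) z = algebraMap ℂ _ ζ :=
    Ideal.Quotient.eq.2 (sub_algebraMap_mem_evalIdeal z ζ)
  rw [h, AlgHomClass.commutes]
  rfl

variable [CompleteSpace B]

lemma norm_character_le (φ : characterSpace ℂ B) (a : B) : ‖φ a‖ ≤ ‖a‖ * ‖(1 : B)‖ :=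
  spectrum.norm_le_norm_mul_of_mem (CharacterSpace.apply_mem_spectrum φ a)

/-- Composition of a character with an algebra homomorphism. -/
def characterComap {Q : Type*} [NormedCommRing Q] [NormedAlgebra ℂ Q] [CompleteSpace Q]
    (g : B →ₐ[ℂ] Q) (φ : characterSpace ℂ Q) : characterSpace ℂ B :=
  CharacterSpace.equivAlgHom.symm ((CharacterSpace.equivAlgHom φ).comp g)

lemma continuous_characterComap {Q : Type*} [NormedCommRing Q] [NormedAlgebra ℂ Q]
    [CompleteSpace Q] (g : B →ₐ[ℂ] Q) : Continuous (characterComap g) := by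
  refine Continuous.subtype_mk (WeakDual.continuous_of_continuous_eval fun b => ?_) _
  exact continuous_character_apply (g b)

lemma character_eq_zero_of_mem_evalIdeal {z : B} {ζ : ℂ} {φ : characterSpace ℂ B} (h : φ z = ζ)
    {a : B} (ha : a ∈ evalIdeal z ζ) : φ a = 0 := by
  refine norm_le_zero_iff.1 (le_of_forall_pos_lt_add fun ε hε => ?_)
  obtain ⟨c, hc⟩ := mem_evalIdeal_iff.1 ha (ε / (‖(1 : B)‖ + 1)) (by positivity)
  have h1 : φ a = φ (a - (z - algebraMap ℂ B ζ) * c) := by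
    simp [map_sub, map_mul, h, AlgHomClass.commutes]
  rw [h1, zero_add]
  refine (norm_character_le φ _).trans_lt ?_
  rw [lt_div_iff₀ (by positivity)] at hc
  nlinarith [norm_nonneg (a - (z - algebraMap ℂ B ζ) * c)]

lemma exists_character_quotient {z : B} {ζ : ℂ} {φ : characterSpace ℂ B} (h : φ z = ζ) :
    ∃ ψ : characterSpace ℂ (B ⧸ evalIdeal z ζ),
      ∀ b, ψ (Ideal.Quotient.mk (evalIdeal z ζ) b) = φ b :=
  ⟨CharacterSpace.equivAlgHom.symm (Ideal.Quotient.liftₐ (evalIdeal z ζ)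
    (CharacterSpace.equivAlgHom φ) fun _ ha => character_eq_zero_of_mem_evalIdeal h ha),
    fun _ => rfl⟩

/-- In the quotient of `B` by `evalIdeal z ζ`, the element `b` is an approximate idempotent
whose values at the characters approximate the indicator function of `V`. -/
def IsApproxIdempotentAt (z : B) (V : Set (characterSpace ℂ B)) (b : B) (ζ : ℂ) : Prop :=
  ‖Ideal.Quotient.mk (evalIdeal z ζ) (b ^ 2 - b)‖ ≤ 1 / 10 ∧
    ∀ φ : characterSpace ℂ B, φ z = ζ → (φ ∈ V → ‖φ b - 1‖ ≤ 1 / 100) ∧ (φ ∉ V → ‖φ b‖ ≤ 1 / 100)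

lemma exists_locally_approx_idempotent {z : B} {V : Set (characterSpace ℂ B)} (hV : IsClopen V)
    {ζ₀ : ℂ} {b : B} (hb : b ^ 2 - b ∈ evalIdeal z ζ₀)
    (hbV : ∀ φ : characterSpace ℂ B, φ z = ζ₀ → (φ ∈ V → φ b = 1) ∧ (φ ∉ V → φ b = 0)) :
    ∃ r > 0, ∀ ζ ∈ ball ζ₀ r, IsApproxIdempotentAt z V b ζ := by
  obtain ⟨c, hc⟩ := mem_evalIdeal_iff.1 hb (1 / 20) (by norm_num)
  let F : Set (characterSpace ℂ B) :=
    (V ∩ {φ | 1 / 100 ≤ ‖φ b - 1‖}) ∪ (Vᶜ ∩ {φ | 1 / 100 ≤ ‖φ b‖})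
  have hF : IsClosed F :=
    (hV.isClosed.inter (isClosed_le continuous_const
      ((continuous_character_apply b).sub continuous_const).norm)).union
    (hV.compl.isClosed.inter (isClosed_le continuous_const (continuous_character_apply b).norm))
  have hF' : IsClosed ((fun φ : characterSpace ℂ B => φ z) '' F) :=
    (hF.isCompact.image (continuous_character_apply z)).isClosed
  have hζ₀ : ζ₀ ∈ ((fun φ : characterSpace ℂ B => φ z) '' F)ᶜ := by
    rintro ⟨φ, ⟨hφ, hφ'⟩ | ⟨hφ, hφ'⟩, hz⟩
    · simp only [mem_ofPred_eq, (hbV φ hz).1 hφ] at hφ'; norm_num at hφ'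
    · simp only [mem_ofPred_eq, (hbV φ hz).2 hφ] at hφ'; norm_num at hφ'
  obtain ⟨r, hr, hrF⟩ := Metric.isOpen_iff.1 hF'.isOpen_compl ζ₀ hζ₀
  refine ⟨min r (1 / (20 * (‖c‖ + 1))), by positivity, fun ζ hζ => ⟨?_, fun φ hφ => ?_⟩⟩
  · refine (norm_mk_le_norm_sub_mul z _ c ζ).trans ?_
    have h1 : ‖ζ - ζ₀‖ * ‖c‖ ≤ 1 / 20 := by
      have h2 : ‖ζ - ζ₀‖ < 1 / (20 * (‖c‖ + 1)) :=
        (mem_ball_iff_norm.1 hζ).trans_le (min_le_right _ _)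
      rw [lt_div_iff₀ (by positivity)] at h2
      nlinarith [norm_nonneg (ζ - ζ₀)]
    calc _ = ‖(b ^ 2 - b - (z - algebraMap ℂ B ζ₀) * c) + (ζ - ζ₀) • c‖ := by
          rw [Algebra.smul_def, map_sub]; congr 1; ring
      _ ≤ _ := norm_add_le _ _
      _ ≤ 1 / 10 := by rw [norm_smul]; linarith
  · have h3 : φ ∉ F := fun h =>
      hrF (ball_subset_ball (min_le_left _ _) hζ) ⟨φ, h, hφ⟩
    refine ⟨fun h => ?_, fun h => ?_⟩ <;> by_contra! hlt
    · exact h3 (Or.inl ⟨h, hlt.le⟩)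
    · exact h3 (Or.inr ⟨h, hlt.le⟩)

lemma exists_smooth_approx_family {z : B} {V : Set (characterSpace ℂ B)}
    (hV : IsClopen V) (H : ∀ ζ : ℂ, ∃ b : B, b ^ 2 - b ∈ evalIdeal z ζ ∧
      ∀ φ : characterSpace ℂ B, φ z = ζ → (φ ∈ V → φ b = 1) ∧ (φ ∉ V → φ b = 0)) (R : ℝ) :
    ∃ (ι : Type) (_ : Fintype ι) (b : ι → B) (χ : ι → ℂ → ℂ),
      (∀ i, ContDiff ℝ 1 (χ i)) ∧ (∀ i, HasCompactSupport (χ i)) ∧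
      (∀ i, ∀ ζ ∈ tsupport (χ i), IsApproxIdempotentAt z V (b i) ζ) ∧
      (∀ ζ ∈ closedBall (0 : ℂ) R, ∑ i, χ i ζ = 1 ∧ ∑ i, ‖χ i ζ‖ = 1) := by
  choose b hb hbV using H
  choose r hr hrb using fun ζ => exists_locally_approx_idempotent hV (hb ζ) (hbV ζ)
  obtain ⟨t, ht⟩ := (isCompact_closedBall (0 : ℂ) R).elim_finite_subcover (fun ζ => ball ζ (r ζ))
    (fun _ => isOpen_ball) fun ζ _ => mem_iUnion.2 ⟨ζ, mem_ball_self (hr ζ)⟩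
  obtain ⟨f, hf⟩ := SmoothPartitionOfUnity.exists_isSubordinate 𝓘(ℝ, ℂ)
    (isClosed_closedBall (x := (0 : ℂ)) (ε := R)) (fun i : t => ball (i : ℂ) (r i))
    (fun _ => isOpen_ball) (by simpa only [iUnion_subtype] using ht)
  have hts : ∀ i : t, tsupport (fun ζ => (f i ζ : ℂ)) ⊆ tsupport (f i) := fun i =>
    closure_mono fun ζ hζ h => hζ (by simp only [h, Complex.ofReal_zero])
  refine ⟨t, inferInstance, fun i => b i, fun i ζ => (f i ζ : ℂ), fun i => ?_, fun i => ?_,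
    fun i ζ hζ => ?_, fun ζ hζ => ?_⟩
  · exact Complex.ofRealCLM.contDiff.comp
      ((contMDiff_iff_contDiff.1 (f i).contMDiff).of_le (by exact_mod_cast le_top))
  · exact HasCompactSupport.of_support_subset_isCompact (isCompact_closedBall (i : ℂ) (r i))
      ((subset_tsupport _).trans ((hts i).trans ((hf i).trans ball_subset_closedBall)))
  · exact hrb _ ζ (hf i (hts i hζ))
  · have h1 : ∑ i, f i ζ = 1 := by rw [← finsum_eq_sum_of_fintype]; exact f.sum_eq_one hζ
    refine ⟨by simp only [← Complex.ofReal_sum, h1, Complex.ofReal_one], ?_⟩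
    simpa only [Complex.norm_real, Real.norm_of_nonneg (f.nonneg _ _)] using h1

lemma norm_mk_iterate_sub_iterate_le {z : B} {V : Set (characterSpace ℂ B)} {b b' : B} {ζ : ℂ}
    (hb : IsApproxIdempotentAt z V b ζ) (hb' : IsApproxIdempotentAt z V b' ζ) {C : ℝ}
    (hC : ‖2 * b - 1‖ ≤ C) (hC' : ‖2 * b' - 1‖ ≤ C) (k : ℕ) :
    ‖Ideal.Quotient.mk (evalIdeal z ζ) (idemStep^[k] b - idemStep^[k] b')‖
      ≤ 2 * C * (3 / 5) ^ k := by
  rw [map_sub, map_iterate_idemStep, map_iterate_idemStep]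
  refine norm_iterate_sub_iterate_le (by simpa using hb.1) (by simpa using hb'.1)
    (le_trans ?_ hC) (le_trans ?_ hC') (fun φ => ?_) k
  · simpa [map_ofNat] using Ideal.Quotient.norm_mk_le (evalIdeal z ζ) (2 * b - 1)
  · simpa [map_ofNat] using Ideal.Quotient.norm_mk_le (evalIdeal z ζ) (2 * b' - 1)
  · let ψ := characterComap (Ideal.Quotient.mkₐ ℂ (evalIdeal z ζ)) φ
    have hψ : ψ z = ζ := character_mk_evalIdeal φ
    have h := hb.2 ψ hψ
    have h' := hb'.2 ψ hψ
    by_cases hψV : ψ ∈ V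
    · exact Or.inr ⟨(h.1 hψV).trans (by norm_num), (h'.1 hψV).trans (by norm_num)⟩
    · exact Or.inl ⟨(h.2 hψV).trans (by norm_num), (h'.2 hψV).trans (by norm_num)⟩

lemma exists_norm_dbar_sum_sub_mul_lt {z : B} {V : Set (characterSpace ℂ B)} {ι : Type}
    [Fintype ι] {b : ι → B} {χ : ι → ℂ → ℂ} (hχ : ∀ i, ContDiff ℝ 1 (χ i))
    (hχs : ∀ i, HasCompactSupport (χ i))
    (hb : ∀ i, ∀ ζ ∈ tsupport (χ i), IsApproxIdempotentAt z V (b i) ζ) {R : ℝ}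
    (hR : ‖z‖ * ‖(1 : B)‖ < R) (hsum : ∀ ζ ∈ closedBall (0 : ℂ) R, ∑ i, χ i ζ = 1) {δ : ℝ}
    (hδ : 0 < δ) :
    ∃ k : ℕ, ∀ ζ, ∃ c,
      ‖∑ i, dbar (χ i) ζ • idemStep^[k] (b i) - (z - algebraMap ℂ B ζ) * c‖ < δ := by
  have hM : ∀ i, ∃ M, ∀ ζ, ‖dbar (χ i) ζ‖ ≤ M := fun i => by
    refine (continuous_dbar (hχ i)).bounded_above_of_compact_support ?_
    refine HasCompactSupport.of_support_subset_isCompact (hχs i) fun ζ hζ => ?_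
    by_contra h
    exact hζ (dbar_eq_zero_of_notMem_tsupport h)
  choose M hM using hM
  have hM0 : ∀ i, 0 ≤ M i := fun i => (norm_nonneg _).trans (hM i 0)
  let C := ∑ i, ‖2 * b i - 1‖
  have hC : ∀ i, ‖2 * b i - 1‖ ≤ C := fun i =>
    Finset.single_le_sum (f := fun i => ‖2 * b i - 1‖) (fun _ _ => norm_nonneg _)
      (Finset.mem_univ i)
  have hC0 : 0 ≤ C := Finset.sum_nonneg fun _ _ => norm_nonneg _
  have hlim : Tendsto (fun k : ℕ => (∑ i, M i) * (2 * C) * (3 / 5 : ℝ) ^ k) atTop (𝓝 0) := by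
    simpa using (tendsto_pow_atTop_nhds_zero_of_lt_one (r := (3 / 5 : ℝ)) (by norm_num)
      (by norm_num)).const_mul ((∑ i, M i) * (2 * C))
  obtain ⟨k, hk⟩ := (hlim.eventually_lt_const hδ).exists
  refine ⟨k, fun ζ => ?_⟩
  rcases lt_or_ge ‖ζ‖ R with hζ | hζ
  · refine exists_norm_sub_mul_lt (lt_of_le_of_lt ?_ hk)
    have hdsum : ∑ i, dbar (χ i) ζ = 0 := by
      have h1 := dbar_sum_mul (fun i => (hχ i).differentiable one_ne_zero) (fun _ => 1) ζ
      simp only [mul_one] at h1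
      rw [← h1]
      refine dbar_eq_zero_of_eventuallyEq_const (c := 1) ?_
      filter_upwards [isOpen_ball.mem_nhds (mem_ball_zero_iff.2 hζ)] with w hw
      exact hsum w (ball_subset_closedBall hw)
    obtain ⟨i₀, hi₀⟩ : ∃ i, ζ ∈ tsupport (χ i) := by
      by_contra! h
      have := hsum ζ (mem_closedBall_zero_iff.2 hζ.le)
      rw [Finset.sum_eq_zero fun i _ => image_eq_zero_of_notMem_tsupport (h i)] at this
      exact zero_ne_one this
    have hD : ∑ i, dbar (χ i) ζ • idemStep^[k] (b i)
        = ∑ i, dbar (χ i) ζ • (idemStep^[k] (b i) - idemStep^[k] (b i₀)) := by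
      simp only [smul_sub, Finset.sum_sub_distrib]
      rw [← Finset.sum_smul, hdsum, zero_smul, sub_zero]
    rw [hD, map_sum, Finset.sum_mul, Finset.sum_mul]
    refine norm_sum_le_of_le _ fun i _ => ?_
    by_cases hi : ζ ∈ tsupport (χ i)
    · have h2 := norm_mk_iterate_sub_iterate_le (hb i ζ hi) (hb i₀ ζ hi₀) (hC i) (hC i₀) k
      have h3 : Ideal.Quotient.mk (evalIdeal z ζ)
          (dbar (χ i) ζ • (idemStep^[k] (b i) - idemStep^[k] (b i₀)))
          = dbar (χ i) ζ • Ideal.Quotient.mk (evalIdeal z ζ)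
            (idemStep^[k] (b i) - idemStep^[k] (b i₀)) := rfl
      rw [h3, norm_smul, mul_assoc]
      exact mul_le_mul (hM i ζ) h2 (norm_nonneg _) (hM0 i)
    · rw [dbar_eq_zero_of_notMem_tsupport hi, zero_smul, map_zero, norm_zero]
      have := hM0 i
      positivity
  · have hu : IsUnit (z - algebraMap ℂ B ζ) := by
      have h1 : ζ ∉ spectrum ℂ z := fun h =>
        (spectrum.norm_le_norm_mul_of_mem h).not_gt (hR.trans_le hζ)
      have h2 := spectrum.notMem_iff.1 h1
      rwa [← IsUnit.neg_iff, neg_sub] at h2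
    obtain ⟨u, hu⟩ := hu
    refine ⟨↑u⁻¹ * ∑ i, dbar (χ i) ζ • idemStep^[k] (b i), ?_⟩
    rw [← hu, Units.mul_inv_cancel_left, sub_self, norm_zero]
    exact hδ

omit [CompleteSpace B] in
lemma norm_character_sum_sub_le {z : B} {V : Set (characterSpace ℂ B)} {ι : Type}
    [Fintype ι] {b : ι → B} {χ : ι → ℂ → ℂ}
    (hb : ∀ i, ∀ ζ ∈ tsupport (χ i), IsApproxIdempotentAt z V (b i) ζ)
    {φ : characterSpace ℂ B} (hsum : ∑ i, χ i (φ z) = 1) (hsum' : ∑ i, ‖χ i (φ z)‖ = 1) (k : ℕ) :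
    (φ ∈ V → ‖∑ i, χ i (φ z) * φ (idemStep^[k] (b i)) - 1‖ ≤ 1 / 100) ∧
      (φ ∉ V → ‖∑ i, χ i (φ z) * φ (idemStep^[k] (b i))‖ ≤ 1 / 100) := by
  have key : ∀ s : ℂ, (∀ i, φ z ∈ tsupport (χ i) → ‖φ (idemStep^[k] (b i)) - s‖ ≤ 1 / 100) →
      ‖∑ i, χ i (φ z) * φ (idemStep^[k] (b i)) - s‖ ≤ 1 / 100 := fun s hs => by
    have h1 : ∑ i, χ i (φ z) * φ (idemStep^[k] (b i)) - s
        = ∑ i, χ i (φ z) * (φ (idemStep^[k] (b i)) - s) := by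
      simp only [mul_sub, Finset.sum_sub_distrib, ← Finset.sum_mul, hsum, one_mul]
    have h2 : (1 / 100 : ℝ) = ∑ i, ‖χ i (φ z)‖ * (1 / 100) := by
      rw [← Finset.sum_mul, hsum', one_mul]
    rw [h1]
    refine le_of_le_of_eq ?_ h2.symm
    refine norm_sum_le_of_le _ fun i _ => ?_
    rw [norm_mul]
    by_cases hi : φ z ∈ tsupport (χ i)
    · exact mul_le_mul_of_nonneg_left (hs i hi) (norm_nonneg _)
    · simp [image_eq_zero_of_notMem_tsupport hi]
  refine ⟨fun hφ => key 1 fun i hi => ?_, fun hφ => ?_⟩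
  · rw [map_iterate_idemStep]
    exact norm_iterate_idemStep_sub_one_le (by norm_num) (((hb i _ hi).2 φ rfl).1 hφ) k
  · simpa using key 0 fun i hi => by
      rw [map_iterate_idemStep, sub_zero]
      exact norm_iterate_idemStep_le (by norm_num) (((hb i _ hi).2 φ rfl).2 hφ) k

lemma exists_idempotent_of_fiberwise {z : B} {V : Set (characterSpace ℂ B)}
    (hV : IsClopen V) (H : ∀ ζ : ℂ, ∃ b : B, b ^ 2 - b ∈ evalIdeal z ζ ∧
      ∀ φ : characterSpace ℂ B, φ z = ζ → (φ ∈ V → φ b = 1) ∧ (φ ∉ V → φ b = 0)) :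
    ∃ e : B, e * e = e ∧ (∀ φ ∈ V, φ e = 1) ∧ ∀ φ ∉ V, φ e = 0 := by
  let R : ℝ := ‖z‖ * ‖(1 : B)‖ + 1
  have hR : ‖z‖ * ‖(1 : B)‖ < R := lt_add_one _
  obtain ⟨ι, _, b, χ, hχ, hχs, hb, hsum⟩ := exists_smooth_approx_family hV H R
  obtain ⟨R', hRR', hR'⟩ :=
    (isCompact_iUnion fun i => hχs i).isBounded.subset_ball_lt R 0
  let J : ℝ := ∫ w in ball (0 : ℂ) (2 * R'), ‖w‖⁻¹
  have hJ : 0 ≤ J := MeasureTheory.integral_nonneg fun _ => by positivity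
  let δ : ℝ := (Real.pi / 100) / (‖(1 : B)‖ * J + 1)
  have hδ : 0 < δ := by have := Real.pi_pos; positivity
  obtain ⟨k, hk⟩ := exists_norm_dbar_sum_sub_mul_lt hχ hχs hb hR (fun ζ hζ => (hsum ζ hζ).1) hδ
  let D : ℂ → B := fun ζ => ∑ i, dbar (χ i) ζ • idemStep^[k] (b i)
  have hD : Continuous D :=
    continuous_finsetSum _ fun i _ => (continuous_dbar (hχ i)).smul continuous_const
  obtain ⟨G, hG⟩ := exists_continuous_forall_mem_convex_of_local_const
    (t := fun ζ : ℂ => {c : B | ‖D ζ - (z - algebraMap ℂ B ζ) * c‖ < δ})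
    (fun ζ => by
      have h := (convex_ball (D ζ) δ).linear_preimage
        (LinearMap.mulLeft ℝ (z - algebraMap ℂ B ζ))
      have h' : {c : B | ‖D ζ - (z - algebraMap ℂ B ζ) * c‖ < δ}
          = LinearMap.mulLeft ℝ (z - algebraMap ℂ B ζ) ⁻¹' ball (D ζ) δ := by
        ext c
        simp [dist_eq_norm, norm_sub_rev (D ζ)]
      rw [h']
      exact h)
    (fun ζ => by
      obtain ⟨c, hc⟩ := hk ζ
      have hcont : Continuous fun ζ => ‖D ζ - (z - algebraMap ℂ B ζ) * c‖ :=
        (hD.sub ((continuous_const.sub (continuous_algebraMap ℂ B)).mul continuous_const)).norm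
      exact ⟨c, hcont.continuousAt.eventually_lt continuousAt_const hc⟩)
  have hGi : MeasureTheory.IntegrableOn G (ball (0 : ℂ) R') :=
    (G.continuous.continuousOn.integrableOn_compact
      (isCompact_closedBall (0 : ℂ) R')).mono_set ball_subset_closedBall
  let e₀ : B := (Real.pi : ℂ)⁻¹ • ∫ w in ball (0 : ℂ) R', G w
  have hφG : ∀ φ : characterSpace ℂ B, φ e₀
      = (Real.pi : ℂ)⁻¹ * ∫ w in ball (0 : ℂ) R', φ (G w) := fun φ => by
    rw [map_smul, smul_eq_mul]
    congr 1
    exact ((CharacterSpace.toCLM φ).integral_comp_comm hGi).symm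
  have key : ∀ φ : characterSpace ℂ B,
      ‖∑ i, χ i (φ z) * φ (idemStep^[k] (b i)) - φ e₀‖ ≤ 1 / 100 := fun φ => by
    rw [hφG]
    refine (norm_sub_integral_le (g := fun w => ∑ i, χ i w * φ (idemStep^[k] (b i)))
      (G := fun w => φ (G w)) (R := R') (δ := δ * ‖(1 : B)‖) (a := φ z) ?_ ?_ ?_ ?_ ?_ ?_).trans ?_
    · exact ContDiff.sum fun i _ => (hχ i).mul contDiff_const
    · exact (CharacterSpace.toCLM φ).continuous.comp G.continuous
    · refine Subset.trans (closure_minimal ?_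
        (isClosed_iUnion_of_finite fun i => isClosed_tsupport (χ i))) hR'
      intro w hw
      by_contra hw'
      simp only [mem_iUnion, not_exists] at hw'
      exact hw (Finset.sum_eq_zero fun i _ => by
        rw [image_eq_zero_of_notMem_tsupport (hw' i), zero_mul])
    · exact mem_ball_zero_iff.2 (((norm_character_le φ z).trans_lt hR).trans hRR')
    · positivity
    · intro w
      rw [dbar_sum_mul fun i => (hχ i).differentiable one_ne_zero]
      have h1 : ∑ i, dbar (χ i) w * φ (idemStep^[k] (b i)) - (φ z - w) * φ (G w)
          = φ (D w - (z - algebraMap ℂ B w) * G w) := by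
        simp only [D, map_sub, map_mul, map_sum, map_smul, smul_eq_mul, AlgHomClass.commutes]
        rfl
      rw [h1]
      exact (norm_character_le φ _).trans (mul_le_mul_of_nonneg_right (hG w).le (norm_nonneg _))
    · have h2 : δ * (‖(1 : B)‖ * J) ≤ Real.pi / 100 := by
        have h3 : 0 < ‖(1 : B)‖ * J + 1 := by positivity
        have h4 : δ * (‖(1 : B)‖ * J + 1) = Real.pi / 100 := div_mul_cancel₀ _ h3.ne'
        linarith
      calc _ = Real.pi⁻¹ * (δ * (‖(1 : B)‖ * J)) := by ring
        _ ≤ Real.pi⁻¹ * (Real.pi / 100) :=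
          mul_le_mul_of_nonneg_left h2 (inv_nonneg.2 Real.pi_pos.le)
        _ = 1 / 100 := by field_simp
  have hφz : ∀ φ : characterSpace ℂ B, φ z ∈ closedBall (0 : ℂ) R := fun φ =>
    mem_closedBall_zero_iff.2 ((norm_character_le φ z).trans hR.le)
  refine exists_idempotent_of_approx V e₀ (fun φ hφ => ?_) fun φ hφ => ?_
  · have h1 := (norm_character_sum_sub_le hb (hsum _ (hφz φ)).1 (hsum _ (hφz φ)).2 k).1 hφ
    have h2 := key φ
    rw [norm_sub_rev] at h2
    linarith [norm_sub_le_norm_sub_add_norm_sub (φ e₀)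
      (∑ i, χ i (φ z) * φ (idemStep^[k] (b i))) 1]
  · have h1 := (norm_character_sum_sub_le hb (hsum _ (hφz φ)).1 (hsum _ (hφz φ)).2 k).2 hφ
    have h2 := key φ
    rw [norm_sub_rev] at h2
    linarith [norm_le_norm_add_norm_sub' (φ e₀) (∑ i, χ i (φ z) * φ (idemStep^[k] (b i)))]

/-- If finitely many elements of a commutative Banach algebra separate its characters, then every
clopen set of characters is the support of an idempotent. -/
theorem exists_idempotent_of_isClopen (n : ℕ) : ∀ {B : Type*} [NormedCommRing B]
    [NormedAlgebra ℂ B] [CompleteSpace B] (z : Fin n → B)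
    (_ : ∀ φ ψ : characterSpace ℂ B, (∀ j, φ (z j) = ψ (z j)) → φ = ψ)
    {V : Set (characterSpace ℂ B)} (_ : IsClopen V),
    ∃ e : B, e * e = e ∧ (∀ φ ∈ V, φ e = 1) ∧ ∀ φ ∉ V, φ e = 0 := by
  induction n with
  | zero =>
    intro B _ _ _ z hz V hV
    have hs : Subsingleton (characterSpace ℂ B) := ⟨fun φ ψ => hz φ ψ fun j => j.elim0⟩
    rcases V.eq_empty_or_nonempty with rfl | hne
    · exact ⟨0, by simp, by simp, fun φ _ => map_zero φ⟩
    · exact ⟨1, by simp, fun φ _ => map_one φ,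
        fun φ hφ => absurd (hs.eq_univ_of_nonempty hne ▸ mem_univ φ) hφ⟩
  | succ n ih =>
    intro B _ _ _ z hz V hV
    refine exists_idempotent_of_fiberwise (z := z 0) hV fun ζ => ?_
    let p := Ideal.Quotient.mkₐ ℂ (evalIdeal (z 0) ζ)
    obtain ⟨e, he, heV, heV'⟩ := ih (fun j => p (z j.succ)) (fun φ ψ h => by
      have h1 : characterComap p φ = characterComap p ψ := by
        refine hz _ _ (Fin.cases ?_ h)
        exact (character_mk_evalIdeal φ).trans (character_mk_evalIdeal ψ).symm
      refine DFunLike.ext _ _ fun x => ?_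
      obtain ⟨y, rfl⟩ := Ideal.Quotient.mk_surjective x
      exact DFunLike.congr_fun h1 y) (hV.preimage (continuous_characterComap p))
    obtain ⟨b, rfl⟩ := Ideal.Quotient.mk_surjective e
    refine ⟨b, ?_, fun φ hφ => ?_⟩
    · rw [pow_two, ← Ideal.Quotient.eq, map_mul, he]
    · obtain ⟨ψ, hψ⟩ := exists_character_quotient hφ
      have h2 : characterComap p ψ = φ := DFunLike.ext _ _ hψ
      rw [← hψ b]
      exact ⟨fun h => heV ψ (by rwa [mem_preimage, h2]),
        fun h => heV' ψ (by rwa [mem_preimage, h2])⟩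

end Shilov

section Hefer

variable {E : Type*} [NormedAddCommGroup E] [NormedSpace ℂ E] [FiniteDimensional ℂ E]

lemma exists_thickening_norm_fderiv_le {U P : Set E} (hU : IsOpen U) {g : E → ℂ}
    (hg : DifferentiableOn ℂ g U) (hP : IsCompact P) (hPU : P ⊆ U) :
    ∃ ε > 0, thickening ε P ⊆ U ∧ ∃ M, ∀ p ∈ thickening ε P, ‖fderiv ℂ g p‖ ≤ M := by
  have := FiniteDimensional.proper ℂ E
  obtain ⟨δ, hδ, hδU⟩ := hP.exists_cthickening_subset_open hU hPU
  obtain ⟨M, hM⟩ := (hP.cthickening (r := δ)).exists_bound_of_continuousOn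
    (hg.continuousOn.mono hδU)
  refine ⟨δ / 2, half_pos hδ, ?_, (M + M) / (δ / 2), fun p hp => ?_⟩
  · exact ((thickening_mono (half_le_self hδ.le) P).trans (thickening_subset_cthickening δ P)).trans
      hδU
  · have hb : ball p (δ / 2) ⊆ cthickening δ P := by
      intro q hq
      obtain ⟨y, hy, hpy⟩ := mem_thickening_iff.1 hp
      refine thickening_subset_cthickening δ P (mem_thickening_iff.2 ⟨y, hy, ?_⟩)
      linarith [dist_triangle q p y, mem_ball.1 hq]
    refine Complex.norm_fderiv_le_div_of_mapsTo_ball (hg.mono (hb.trans hδU)) (fun q hq => ?_)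
      (half_pos hδ)
    rw [mem_closedBall, dist_eq_norm]
    exact (norm_sub_le _ _).trans
      (add_le_add (hM q (hb hq)) (hM p (hb (mem_ball_self (half_pos hδ)))))

lemma differentiableAt_integral_comp {U : Set E} (hU : IsOpen U) {g : E → ℂ}
    (hg : DifferentiableOn ℂ g U) {T : ℝ} (hT : 0 ≤ T) {c s : ℝ → ℂ} {A : ℝ → E}
    (hc : Continuous c) (hs : Continuous s) (hA : Continuous A) {w₀ : E}
    (hw₀ : ∀ t ∈ Icc 0 T, A t + s t • w₀ ∈ U) :
    DifferentiableAt ℂ (fun w => ∫ t in (0)..T, c t * g (A t + s t • w)) w₀ := by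
  have := FiniteDimensional.proper ℂ E
  have : FiniteDimensional ℂ (E →L[ℂ] ℂ) := inferInstance
  have : ProperSpace (E →L[ℂ] ℂ) := FiniteDimensional.proper ℂ _
  borelize E
  have hcont : ∀ w : E, Continuous fun t => A t + s t • w := fun w =>
    hA.add (hs.smul continuous_const)
  obtain ⟨ε, hε, hεU, M, hM⟩ := exists_thickening_norm_fderiv_le hU hg
    (isCompact_Icc.image (hcont w₀)) (image_subset_iff.2 hw₀)
  obtain ⟨C, hC⟩ := isCompact_Icc.exists_bound_of_continuousOn (hc.continuousOn (s := Icc 0 T))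
  obtain ⟨C', hC'⟩ := isCompact_Icc.exists_bound_of_continuousOn (hs.continuousOn (s := Icc 0 T))
  have h0 : (0 : ℝ) ∈ Icc 0 T := left_mem_Icc.2 hT
  have hC0 : 0 ≤ C := (norm_nonneg _).trans (hC 0 h0)
  have hC'0 : 0 ≤ C' := (norm_nonneg _).trans (hC' 0 h0)
  have hmem : ∀ w ∈ ball w₀ (ε / (C' + 1)), ∀ t ∈ Icc 0 T,
      A t + s t • w ∈ thickening ε ((fun t => A t + s t • w₀) '' Icc 0 T) := fun w hw t ht => by
    refine mem_thickening_iff.2 ⟨_, mem_image_of_mem _ ht, ?_⟩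
    rw [dist_add_left, dist_eq_norm, ← smul_sub, norm_smul]
    have h1 := mem_ball_iff_norm.1 hw
    rw [lt_div_iff₀ (by positivity)] at h1
    nlinarith [hC' t ht, norm_nonneg (w - w₀), norm_nonneg (s t)]
  have hball : ball w₀ (ε / (C' + 1)) ∈ 𝓝 w₀ := ball_mem_nhds _ (by positivity)
  have hFc : ∀ w ∈ ball w₀ (ε / (C' + 1)),
      ContinuousOn (fun t => c t * g (A t + s t • w)) (Icc 0 T) := fun w hw =>
    hc.continuousOn.mul (hg.continuousOn.comp (hcont w).continuousOn
      fun t ht => hεU (hmem w hw t ht))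
  refine (intervalIntegral.hasFDerivAt_integral_of_dominated_of_fderiv_le
    (F' := fun w t => c t • s t • fderiv ℂ g (A t + s t • w)) (bound := fun _ => C * (C' * M))
    hball ?_ ?_ ?_ ?_ intervalIntegrable_const ?_).differentiableAt
  · filter_upwards [hball] with w hw
    rw [uIoc_of_le hT]
    exact ((hFc w hw).mono Ioc_subset_Icc_self).aestronglyMeasurable measurableSet_Ioc
  · exact ContinuousOn.intervalIntegrable_of_Icc hT (hFc w₀ (mem_of_mem_nhds hball))
  · refine (hc.aestronglyMeasurable.smul (hs.aestronglyMeasurable.smul ?_))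
    exact ((measurable_fderiv ℂ g).comp (hcont w₀).measurable).aestronglyMeasurable
  · refine Eventually.of_forall fun t ht w hw => ?_
    rw [uIoc_of_le hT] at ht
    have ht' := Ioc_subset_Icc_self ht
    rw [norm_smul, norm_smul]
    have h1 := hM _ (hmem w hw t ht')
    exact mul_le_mul (hC t ht') (mul_le_mul (hC' t ht') h1 (norm_nonneg _) hC'0) (by positivity) hC0
  · refine Eventually.of_forall fun t ht w hw => ?_
    rw [uIoc_of_le hT] at ht
    have hp := hεU (hmem w hw t (Ioc_subset_Icc_self ht))
    have h1 : HasFDerivAt (fun w => A t + s t • w) (s t • ContinuousLinearMap.id ℂ E) w :=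
      ((hasFDerivAt_id w).const_smul (s t)).const_add (A t)
    refine (((hg.differentiableAt (hU.mem_nhds hp)).hasFDerivAt.comp w h1).const_mul
      (c t)).congr_fderiv ?_
    ext v
    simp

lemma differentiableOn_fderiv_apply {U : Set E} (hU : IsOpen U) {g : E → ℂ}
    (hg : DifferentiableOn ℂ g U) (v : E) : DifferentiableOn ℂ (fun w => fderiv ℂ g w v) U := by
  intro w₀ hw₀
  refine DifferentiableAt.differentiableWithinAt ?_
  obtain ⟨r, hr, hrU⟩ := Metric.isOpen_iff.1 hU w₀ hw₀
  let ρ : ℝ := r / (4 * (‖v‖ + 1))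
  have hρ : 0 < ρ := by positivity
  have hmem : ∀ w ∈ ball w₀ (r / 2), ∀ ζ ∈ ball (0 : ℂ) (2 * ρ), w + ζ • v ∈ U := by
    intro w hw ζ hζ
    refine hrU (mem_ball_iff_norm.2 ?_)
    have h1 : 2 * ρ * (‖v‖ + 1) = r / 2 := by simp only [ρ]; field_simp; ring
    have h2 := mem_ball_zero_iff.1 hζ
    have h3 := mem_ball_iff_norm.1 hw
    calc ‖w + ζ • v - w₀‖ = ‖(w - w₀) + ζ • v‖ := by congr 1; abel
      _ ≤ ‖w - w₀‖ + ‖ζ‖ * ‖v‖ := (norm_add_le _ _).trans_eq (by rw [norm_smul])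
      _ < r := by nlinarith [norm_nonneg v, norm_nonneg ζ]
  have hd : DifferentiableAt ℂ (fun w => ∫ θ in (0)..(2 * Real.pi),
      ((2 * Real.pi * Complex.I)⁻¹ * (deriv (circleMap 0 ρ) θ * (circleMap 0 ρ θ ^ 2)⁻¹)) *
        g (circleMap 0 ρ θ • v + (1 : ℂ) • w)) w₀ := by
    refine differentiableAt_integral_comp hU hg (by positivity) ?_ continuous_const ?_
      fun θ _ => ?_
    · refine continuous_const.mul (Continuous.mul ?_ (Continuous.inv₀ (by fun_prop) ?_))
      · rw [show deriv (circleMap 0 ρ) = fun θ => circleMap 0 ρ θ * Complex.I from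
          funext fun θ => deriv_circleMap 0 ρ θ]
        fun_prop
      · exact fun θ => pow_ne_zero 2 (circleMap_ne_center hρ.ne')
    · fun_prop
    · rw [one_smul, add_comm]
      refine hmem w₀ (mem_ball_self (by positivity)) _ ?_
      rw [mem_ball_zero_iff, norm_circleMap_zero, abs_of_pos hρ]
      linarith
  refine hd.congr_of_eventuallyEq ?_
  filter_upwards [ball_mem_nhds w₀ (half_pos hr)] with w hw
  have h1 : DifferentiableOn ℂ (fun ζ : ℂ => g (w + ζ • v)) (ball 0 (2 * ρ)) :=
    hg.comp (by fun_prop) fun ζ hζ => hmem w hw ζ hζ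
  have h2 := Complex.cderiv_eq_deriv isOpen_ball h1 hρ
    (closedBall_subset_ball (by linarith : ρ < 2 * ρ))
  have h3 : HasDerivAt (fun ζ : ℂ => g (w + ζ • v)) (fderiv ℂ g w v) 0 := by
    have h4 : HasDerivAt (fun ζ : ℂ => w + ζ • v) v 0 := by
      simpa using ((hasDerivAt_id (0 : ℂ)).smul_const v).const_add w
    have hw' : w + (0 : ℂ) • v ∈ U := hmem w hw 0 (mem_ball_self (by positivity))
    have h5 := (hg.differentiableAt (hU.mem_nhds hw')).hasFDerivAt.comp_hasDerivAt 0 h4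
    simp only [zero_smul, add_zero] at h5
    exact h5
  rw [← h3.deriv, ← h2, Complex.cderiv, circleIntegral, smul_eq_mul,
    ← intervalIntegral.integral_const_mul]
  refine intervalIntegral.integral_congr fun θ _ => ?_
  simp only [smul_eq_mul, sub_zero, one_smul]
  rw [add_comm w]
  ring

omit [FiniteDimensional ℂ E] in
lemma Convex.one_sub_smul_add_smul_mem {X : Set E} (hXc : Convex ℝ X) {a z : E} (ha : a ∈ X)
    (hz : z ∈ X) {t : ℝ} (ht : t ∈ Icc (0 : ℝ) 1) : (1 - (t : ℂ)) • a + (t : ℂ) • z ∈ X := by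
  have h := hXc ha hz (sub_nonneg.2 ht.2) ht.1 (by ring)
  rwa [← Complex.coe_smul (1 - t), ← Complex.coe_smul t, Complex.ofReal_sub,
    Complex.ofReal_one] at h

omit [FiniteDimensional ℂ E] in
lemma sub_eq_integral_fderiv_segment {X : Set E} (hX : IsOpen X) (hXc : Convex ℝ X) {g : E → ℂ}
    (hg : DifferentiableOn ℂ g X) {a z : E} (ha : a ∈ X) (hz : z ∈ X)
    (hc : ContinuousOn (fun w => fderiv ℂ g w (z - a)) X) :
    g z - g a = ∫ t in (0 : ℝ)..1, fderiv ℂ g ((1 - (t : ℂ)) • a + (t : ℂ) • z) (z - a) := by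
  have hmem : ∀ t ∈ Icc (0 : ℝ) 1, (1 - (t : ℂ)) • a + (t : ℂ) • z ∈ X := fun t ht =>
    hXc.one_sub_smul_add_smul_mem ha hz ht
  have hder : ∀ t ∈ uIcc (0 : ℝ) 1, HasDerivAt
      (fun t : ℝ => g ((1 - (t : ℂ)) • a + (t : ℂ) • z))
      (fderiv ℂ g ((1 - (t : ℂ)) • a + (t : ℂ) • z) (z - a)) t := fun t ht => by
    rw [uIcc_of_le zero_le_one] at ht
    have h1 : HasDerivAt (fun t : ℂ => (1 - t) • a + t • z) (z - a) (t : ℂ) := by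
      have := (((hasDerivAt_id (t : ℂ)).const_sub 1).smul_const a).add
        ((hasDerivAt_id (t : ℂ)).smul_const z)
      refine this.congr_deriv ?_
      simp [sub_eq_neg_add]
    exact ((hg.differentiableAt (hX.mem_nhds (hmem t ht))).hasFDerivAt.comp_hasDerivAt
      (t : ℂ) h1).comp_ofReal
  rw [intervalIntegral.integral_eq_sub_of_hasDerivAt hder]
  · simp
  · refine ContinuousOn.intervalIntegrable_of_Icc zero_le_one (hc.comp ?_ hmem)
    fun_prop

/-- Hefer's decomposition on a convex domain: `g - g a` lies in the ideal generated by the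
coordinate functions minus their values at `a`. -/
lemma exists_hefer_decomposition {n : ℕ} {X : Set (CSpace n)} (hX : IsOpen X) (hXc : Convex ℝ X)
    {g : CSpace n → ℂ} (hg : DifferentiableOn ℂ g X) {a : CSpace n} (ha : a ∈ X) :
    ∃ q : Fin n → CSpace n → ℂ, (∀ j, DifferentiableOn ℂ (q j) X) ∧
      ∀ z ∈ X, g z - g a = ∑ j, (z j - a j) * q j z := by
  let e : Fin n → CSpace n := fun j => EuclideanSpace.single j 1
  have hmem : ∀ z ∈ X, ∀ t ∈ Icc (0 : ℝ) 1, (1 - (t : ℂ)) • a + (t : ℂ) • z ∈ X :=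
    fun z hz t ht => hXc.one_sub_smul_add_smul_mem ha hz ht
  have hD : ∀ v, DifferentiableOn ℂ (fun w => fderiv ℂ g w v) X := fun v =>
    differentiableOn_fderiv_apply hX hg v
  refine ⟨fun j z => ∫ t in (0 : ℝ)..1,
    1 * fderiv ℂ g ((1 - (t : ℂ)) • a + (t : ℂ) • z) (e j), fun j z hz => ?_, fun z hz => ?_⟩
  · exact (differentiableAt_integral_comp hX (hD (e j)) zero_le_one continuous_const
      Complex.continuous_ofReal (A := fun t : ℝ => (1 - (t : ℂ)) • a) (by fun_prop)
      (hmem z hz)).differentiableWithinAt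
  · rw [sub_eq_integral_fderiv_segment hX hXc hg ha hz (hD (z - a)).continuousOn]
    simp only [one_mul, ← intervalIntegral.integral_const_mul]
    rw [← intervalIntegral.integral_finsetSum]
    · refine intervalIntegral.integral_congr fun t _ => ?_
      have hv : z - a = ∑ j, (z j - a j) • e j := by
        ext i
        simp [e, Finset.sum_apply, Pi.single_apply]
      conv_lhs => rw [hv]
      simp
    · intro j _
      refine (ContinuousOn.intervalIntegrable_of_Icc zero_le_one ?_).const_mul _
      refine (hD (e j)).continuousOn.comp ?_ (hmem z hz)
      fun_prop

end Hefer

section RestrictionAlgebra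

open WeakDual

variable {n : ℕ} {X K : Set (CSpace n)}

/-- The algebra of restrictions to `K` of holomorphic functions on `X`. -/
def holRestrict (X K : Set (CSpace n)) : Subalgebra ℂ C(K, ℂ) where
  carrier := {u | ∃ g : CSpace n → ℂ, DifferentiableOn ℂ g X ∧ ∀ x : K, u x = g x}
  mul_mem' := by
    rintro u v ⟨g, hg, hu⟩ ⟨h, hh, hv⟩
    exact ⟨g * h, hg.mul hh, fun x => by simp [hu, hv]⟩
  add_mem' := by
    rintro u v ⟨g, hg, hu⟩ ⟨h, hh, hv⟩
    exact ⟨g + h, hg.add hh, fun x => by simp [hu, hv]⟩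
  algebraMap_mem' c := ⟨fun _ => c, differentiableOn_const c, fun _ => rfl⟩

variable [CompactSpace K]

/-- The uniform closure on `K` of the restrictions of holomorphic functions on `X`. -/
abbrev UnifAlg (X K : Set (CSpace n)) [CompactSpace K] : Subalgebra ℂ C(K, ℂ) :=
  (holRestrict X K).topologicalClosure

instance : CompleteSpace (UnifAlg X K) :=
  (Subalgebra.isClosed_topologicalClosure (holRestrict X K)).completeSpace_coe

/-- A holomorphic function on `X` as an element of the uniform algebra on `K`. -/
def UnifAlg.ofHol (hKX : K ⊆ X) (g : CSpace n → ℂ) (hg : DifferentiableOn ℂ g X) : UnifAlg X K :=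
  ⟨⟨K.domRestrict g, (hg.continuousOn.mono hKX).domRestrict⟩,
    Subalgebra.le_topologicalClosure _ ⟨g, hg, fun _ => rfl⟩⟩

@[simp]
lemma UnifAlg.ofHol_apply (hKX : K ⊆ X) {g : CSpace n → ℂ} (hg : DifferentiableOn ℂ g X) (x : K) :
    (UnifAlg.ofHol hKX g hg : C(K, ℂ)) x = g x := rfl

lemma UnifAlg.exists_norm_sub_ofHol_lt (hKX : K ⊆ X) (b : UnifAlg X K) {ε : ℝ} (hε : 0 < ε) :
    ∃ g hg, ‖b - UnifAlg.ofHol hKX g hg‖ < ε := by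
  have hb : (b : C(K, ℂ)) ∈ closure (holRestrict X K : Set C(K, ℂ)) := b.2
  obtain ⟨u, ⟨g, hg, hu⟩, hbu⟩ := Metric.mem_closure_iff.1 hb ε hε
  refine ⟨g, hg, ?_⟩
  rw [dist_eq_norm] at hbu
  have : u = (UnifAlg.ofHol hKX g hg : C(K, ℂ)) := ContinuousMap.ext hu
  rw [this] at hbu
  exact hbu

lemma UnifAlg.norm_character_apply_le (φ : characterSpace ℂ (UnifAlg X K)) (b : UnifAlg X K) :
    ‖φ b‖ ≤ ‖b‖ := by
  have h1 : ‖(1 : UnifAlg X K)‖ ≤ 1 := by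
    change ‖(1 : C(K, ℂ))‖ ≤ 1
    rw [ContinuousMap.norm_le _ zero_le_one]
    simp
  exact (norm_character_le φ b).trans (mul_le_of_le_one_right (norm_nonneg _) h1)

/-- The coordinate functions as elements of the uniform algebra. -/
def UnifAlg.coord (hKX : K ⊆ X) (j : Fin n) : UnifAlg X K :=
  UnifAlg.ofHol hKX (fun z => z j) (by fun_prop)

/-- The point of `ℂⁿ` with coordinates the values of a character at the coordinate functions. -/
def UnifAlg.point (hKX : K ⊆ X) (φ : characterSpace ℂ (UnifAlg X K)) : CSpace n :=
  WithLp.toLp 2 fun j => φ (UnifAlg.coord hKX j)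

lemma UnifAlg.continuous_point (hKX : K ⊆ X) : Continuous (UnifAlg.point (K := K) hKX) :=
  (PiLp.continuous_toLp 2 _).comp
    (continuous_pi fun j => continuous_character_apply (UnifAlg.coord hKX j))

lemma UnifAlg.character_ofHol_clm (hKX : K ⊆ X) (φ : characterSpace ℂ (UnifAlg X K))
    (l : CSpace n →L[ℂ] ℂ) :
    φ (UnifAlg.ofHol hKX l l.differentiable.differentiableOn) = l (UnifAlg.point hKX φ) := by
  have hsum : ∀ z : CSpace n, l z = ∑ j, z j * l (EuclideanSpace.single j 1) := fun z => by
    have hz : z = ∑ j, z j • (EuclideanSpace.single j 1 : CSpace n) := by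
      ext i
      simp [Pi.single_apply]
    conv_lhs => rw [hz]
    simp
  have h : UnifAlg.ofHol hKX l l.differentiable.differentiableOn
      = ∑ j, l (EuclideanSpace.single j 1) • UnifAlg.coord (K := K) hKX j := by
    refine Subtype.ext (ContinuousMap.ext fun x => ?_)
    simp [UnifAlg.coord, hsum x, mul_comm]
  rw [h, hsum]
  simp [UnifAlg.point, mul_comm]

lemma UnifAlg.point_mem (hX : IsOpen X) (hXc : Convex ℝ X) (hKX : K ⊆ X)
    (φ : characterSpace ℂ (UnifAlg X K)) : UnifAlg.point hKX φ ∈ X := by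
  by_contra ha
  obtain ⟨l, hl⟩ := RCLike.geometric_hahn_banach_open_point (𝕜 := ℂ) hXc hX ha
  set a := UnifAlg.point hKX φ
  have hne : ∀ z ∈ X, l z - l a ≠ 0 := fun z hz h => by
    have := hl z hz
    rw [sub_eq_zero.1 h] at this
    exact lt_irrefl _ this
  have hd : DifferentiableOn ℂ (fun z => (l z - l a)⁻¹) X :=
    (l.differentiable.differentiableOn.sub_const _).inv hne
  have h1 : (UnifAlg.ofHol hKX l l.differentiable.differentiableOn
      - algebraMap ℂ (UnifAlg X K) (l a)) * UnifAlg.ofHol hKX _ hd = 1 := by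
    refine Subtype.ext (ContinuousMap.ext fun x => ?_)
    exact mul_inv_cancel₀ (hne x (hKX x.2))
  have h2 := congrArg φ h1
  rw [map_mul, map_sub, map_one, AlgHomClass.commutes, UnifAlg.character_ofHol_clm] at h2
  simp [a] at h2

lemma UnifAlg.character_ofHol (hX : IsOpen X) (hXc : Convex ℝ X) (hKX : K ⊆ X)
    (φ : characterSpace ℂ (UnifAlg X K)) {g : CSpace n → ℂ} (hg : DifferentiableOn ℂ g X) :
    φ (UnifAlg.ofHol hKX g hg) = g (UnifAlg.point hKX φ) := by
  obtain ⟨q, hq, hgq⟩ := exists_hefer_decomposition hX hXc hg (UnifAlg.point_mem hX hXc hKX φ)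
  set a := UnifAlg.point hKX φ with ha
  have h : UnifAlg.ofHol hKX g hg - algebraMap ℂ (UnifAlg X K) (g a)
      = ∑ j, (UnifAlg.coord hKX j - algebraMap ℂ (UnifAlg X K) (a j)) *
        UnifAlg.ofHol hKX (q j) (hq j) := by
    refine Subtype.ext (ContinuousMap.ext fun x => ?_)
    have := hgq x (hKX x.2)
    simpa [UnifAlg.coord] using this
  have h2 := congrArg φ h
  have h3 : ∀ j, φ (UnifAlg.coord hKX j) = a j := fun j => rfl
  simp only [map_sub, map_sum, map_mul, AlgHomClass.commutes, h3, Algebra.algebraMap_self,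
    RingHom.id_apply, sub_self, zero_mul, Finset.sum_const_zero] at h2
  exact sub_eq_zero.1 h2

lemma UnifAlg.point_mem_of_oHull_eq (hX : IsOpen X) (hXc : Convex ℝ X) (hKX : K ⊆ X)
    (hK : OHull X K = K) (φ : characterSpace ℂ (UnifAlg X K)) : UnifAlg.point hKX φ ∈ K := by
  refine hK.subset ⟨UnifAlg.point_mem hX hXc hKX φ, fun g hg => ?_⟩
  rw [← UnifAlg.character_ofHol hX hXc hKX φ hg]
  refine (UnifAlg.norm_character_apply_le φ _).trans_eq ?_
  exact ContinuousMap.norm_eq_iSup_norm _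

lemma UnifAlg.character_ext (hX : IsOpen X) (hXc : Convex ℝ X) (hKX : K ⊆ X)
    {φ ψ : characterSpace ℂ (UnifAlg X K)} (h : UnifAlg.point hKX φ = UnifAlg.point hKX ψ) :
    φ = ψ := by
  refine DFunLike.ext _ _ fun b => eq_of_norm_sub_le_zero (le_of_forall_pos_le_add fun ε hε => ?_)
  obtain ⟨g, hg, hb⟩ := UnifAlg.exists_norm_sub_ofHol_lt hKX b (half_pos hε)
  have h1 : φ b - ψ b
      = φ (b - UnifAlg.ofHol hKX g hg) - ψ (b - UnifAlg.ofHol hKX g hg) := by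
    rw [map_sub, map_sub, UnifAlg.character_ofHol hX hXc, UnifAlg.character_ofHol hX hXc, h]
    ring
  rw [h1]
  linarith [norm_sub_le (φ (b - UnifAlg.ofHol hKX g hg)) (ψ (b - UnifAlg.ofHol hKX g hg)),
    UnifAlg.norm_character_apply_le φ (b - UnifAlg.ofHol hKX g hg),
    UnifAlg.norm_character_apply_le ψ (b - UnifAlg.ofHol hKX g hg)]

/-- Evaluation at a point of `K` as a character. -/
def UnifAlg.evalAt (x : K) : characterSpace ℂ (UnifAlg X K) :=
  CharacterSpace.equivAlgHom.symm ((ContinuousMap.evalAlgHom ℂ ℂ x).comp (UnifAlg X K).val)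

end RestrictionAlgebra

/-- Disjoint compact pieces of an `𝒪(X)`-convex compact set are separated by holomorphic functions
that approximate the indicator function of the first piece. -/
lemma exists_hol_approx_indicator {n : ℕ} {X L L' : Set (CSpace n)} (hX : IsOpen X)
    (hXc : Convex ℝ X) (hL : IsCompact L) (hL' : IsCompact L') (hLL' : Disjoint L L')
    (hsub : L ∪ L' ⊆ X) (hhull : OHull X (L ∪ L') = L ∪ L') {ε : ℝ} (hε : 0 < ε) :
    ∃ h : CSpace n → ℂ, DifferentiableOn ℂ h X ∧ (∀ x ∈ L, ‖h x - 1‖ < ε) ∧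
      ∀ x ∈ L', ‖h x‖ < ε := by
  have : CompactSpace ↥(L ∪ L') := isCompact_iff_compactSpace.1 (hL.union hL')
  have hmem := UnifAlg.point_mem_of_oHull_eq hX hXc hsub hhull
  have hcont := UnifAlg.continuous_point hsub
  have hcompl : (UnifAlg.point hsub ⁻¹' L)ᶜ = UnifAlg.point hsub ⁻¹' L' := by
    ext φ
    exact ⟨fun h => (hmem φ).resolve_left h, fun h h' => hLL'.le_bot ⟨h', h⟩⟩
  have hV : IsClopen (UnifAlg.point hsub ⁻¹' L) :=
    ⟨hL.isClosed.preimage hcont, by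
      rw [← isClosed_compl_iff, hcompl]; exact hL'.isClosed.preimage hcont⟩
  obtain ⟨e, -, heV, heV'⟩ := exists_idempotent_of_isClopen n (UnifAlg.coord hsub)
    (fun φ ψ h => UnifAlg.character_ext hX hXc hsub
      (congrArg (WithLp.toLp 2) (funext h))) hV
  obtain ⟨g, hg, heg⟩ := UnifAlg.exists_norm_sub_ofHol_lt hsub e hε
  have hlt : ∀ x : ↥(L ∪ L'), ‖UnifAlg.evalAt x e - g x‖ < ε := fun x =>
    (ContinuousMap.norm_coe_le_norm
      (e - UnifAlg.ofHol hsub g hg : UnifAlg X (L ∪ L')).1 x).trans_lt heg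
  refine ⟨g, hg, fun x hx => ?_, fun x hx => ?_⟩
  · have h1 := hlt ⟨x, Or.inl hx⟩
    rw [heV _ (show UnifAlg.point hsub (UnifAlg.evalAt ⟨x, Or.inl hx⟩) ∈ L from hx)] at h1
    rwa [norm_sub_rev]
  · have h1 := hlt ⟨x, Or.inr hx⟩
    rw [heV' _ (fun h : x ∈ L => hLL'.le_bot ⟨h, hx⟩), zero_sub, norm_neg] at h1
    exact h1

section Hulls

variable {n : ℕ} {X P : Set (CSpace n)}

lemma norm_le_of_mem_oHull {x : CSpace n} (hx : x ∈ OHull X P) {g : CSpace n → ℂ}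
    (hg : DifferentiableOn ℂ g X) {M : ℝ} (hM : 0 ≤ M) (h : ∀ y ∈ P, ‖g y‖ ≤ M) : ‖g x‖ ≤ M :=
  (hx.2 g hg).trans (Real.iSup_le (fun y => h y y.2) hM)

lemma norm_le_iSup_norm (hP : IsCompact P) (hPX : P ⊆ X) {g : CSpace n → ℂ}
    (hg : DifferentiableOn ℂ g X) {y : CSpace n} (hy : y ∈ P) : ‖g y‖ ≤ ⨆ y : P, ‖g ↑y‖ := by
  obtain ⟨M, hM⟩ := hP.exists_bound_of_continuousOn (hg.continuousOn.mono hPX)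
  exact le_ciSup (f := fun y : P => ‖g y‖) ⟨M, by rintro _ ⟨z, rfl⟩; exact hM z z.2⟩ ⟨y, hy⟩

lemma iSup_norm_nonneg (P : Set (CSpace n)) (g : CSpace n → ℂ) : 0 ≤ ⨆ y : P, ‖g ↑y‖ :=
  Real.iSup_nonneg fun _ => norm_nonneg _

lemma oHull_subset : OHull X P ⊆ X := fun _ hx => hx.1

lemma subset_oHull (hP : IsCompact P) (hPX : P ⊆ X) : P ⊆ OHull X P :=
  fun _ hx => ⟨hPX hx, fun _ hg => norm_le_iSup_norm hP hPX hg hx⟩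

lemma map_mem_oHull {m : ℕ} {S A : Set (CSpace m)} {f : CSpace m → CSpace n}
    (hf : DifferentiableOn ℂ f S) (hfS : MapsTo f S X) (hP : IsCompact P) (hPX : P ⊆ X)
    (hfA : MapsTo f A P) {x : CSpace m} (hx : x ∈ OHull S A) : f x ∈ OHull X P :=
  ⟨hfS hx.1, fun _ hg => norm_le_of_mem_oHull hx (hg.comp hf hfS) (iSup_norm_nonneg _ _)
    fun _ hy => norm_le_iSup_norm hP hPX hg (hfA hy)⟩

open scoped Pointwise in
lemma exists_isCompact_convex_between (hX : IsOpen X) (hXc : Convex ℝ X) (hP : IsCompact P)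
    (hPX : P ⊆ X) : ∃ C, IsCompact C ∧ Convex ℝ C ∧ P ⊆ C ∧ C ⊆ X := by
  obtain ⟨δ, hδ, hδX⟩ := hP.exists_cthickening_subset_open hX hPX
  obtain ⟨t, htP, htf, hPt⟩ := hP.finite_cover_balls hδ
  have hC : convexHull ℝ (t + closedBall (0 : CSpace n) δ) = convexHull ℝ t + closedBall (0 : CSpace n) δ := by
    rw [convexHull_add, (convex_closedBall _ _).convexHull_eq]
  refine ⟨convexHull ℝ (t + closedBall (0 : CSpace n) δ), ?_, convex_convexHull ℝ _, fun x hx => ?_,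
    convexHull_min ?_ hXc⟩
  · rw [hC]
    exact (htf.isCompact_convexHull ℝ).add (isCompact_closedBall _ _)
  · obtain ⟨y, hy, hxy⟩ := mem_iUnion₂.1 (hPt hx)
    refine subset_convexHull ℝ _ ⟨y, hy, x - y, ?_, add_sub_cancel y x⟩
    exact mem_closedBall_zero_iff.2 (mem_ball_iff_norm.1 hxy).le
  · rintro _ ⟨y, hy, v, hv, rfl⟩
    refine hδX (mem_cthickening_of_dist_le _ y δ P (htP hy) ?_)
    simpa using hv

lemma oHull_subset_of_convex {C : Set (CSpace n)} (hC : IsClosed C) (hCc : Convex ℝ C)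
    (hPC : P ⊆ C) : OHull X P ⊆ C := by
  intro x hx
  by_contra hxC
  have hP : P.Nonempty := by
    by_contra! h
    have := norm_le_of_mem_oHull hx (g := fun _ => 1)
      (differentiableOn_const (1 : ℂ)) le_rfl (by simp [h])
    norm_num at this
  obtain ⟨l, u, hl, hu⟩ := RCLike.geometric_hahn_banach_closed_point (𝕜 := ℂ) hCc hC hxC
  have h1 := norm_le_of_mem_oHull hx
    (l.differentiable.cexp.differentiableOn) (Real.exp_nonneg u) fun y hy => by
      rw [Complex.norm_exp]
      exact Real.exp_le_exp.2 (hl y (hPC hy)).le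
  rw [Complex.norm_exp, Real.exp_le_exp] at h1
  exact hu.not_ge h1

lemma isCompact_oHull (hX : IsOpen X) (hXc : Convex ℝ X) (hP : IsCompact P) (hPX : P ⊆ X) :
    IsCompact (OHull X P) := by
  obtain ⟨C, hC, hCc, hPC, hCX⟩ := exists_isCompact_convex_between hX hXc hP hPX
  have hsub : OHull X P ⊆ C := oHull_subset_of_convex hC.isClosed hCc hPC
  refine hC.of_isClosed_subset (isClosed_of_closure_subset fun x hx => ?_) hsub
  refine ⟨hCX (closure_minimal hsub hC.isClosed hx), fun g hg => ?_⟩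
  have h1 : IsClosed (C ∩ (fun y => ‖g y‖) ⁻¹' Iic (⨆ y : P, ‖g ↑y‖)) :=
    (hg.continuousOn.mono hCX).norm.preimage_isClosed_of_isClosed hC.isClosed isClosed_Iic
  have h2 : OHull X P ⊆ C ∩ (fun y => ‖g y‖) ⁻¹' Iic (⨆ y : P, ‖g ↑y‖) :=
    fun y hy => ⟨hsub hy, hy.2 g hg⟩
  exact (closure_minimal h2 h1 hx).2

lemma oHull_oHull (hX : IsOpen X) (hXc : Convex ℝ X) (hP : IsCompact P) (hPX : P ⊆ X) :
    OHull X (OHull X P) = OHull X P :=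
  Subset.antisymm
    (fun _ hx => ⟨hx.1, fun g hg => norm_le_of_mem_oHull hx hg (iSup_norm_nonneg P g)
      fun _ hy => hy.2 g hg⟩)
    (subset_oHull (isCompact_oHull hX hXc hP hPX) oHull_subset)

lemma mem_oHull_of_approx_indicator {A A' : Set (CSpace n)} (hA : IsCompact A)
    (hA' : IsCompact A') (hAX : A ⊆ X) (hAX' : A' ⊆ X) {x : CSpace n} (hx : x ∈ OHull X (A ∪ A'))
    (hsep : ∀ ε > 0, ∃ h : CSpace n → ℂ, DifferentiableOn ℂ h X ∧ ‖h x - 1‖ < ε ∧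
      (∀ y ∈ A, ‖h y - 1‖ < ε) ∧ ∀ y ∈ A', ‖h y‖ < ε) : x ∈ OHull X A := by
  refine ⟨hx.1, fun g hg => ?_⟩
  by_contra! hlt
  set m := ⨆ y : A, ‖g ↑y‖
  have hm : 0 ≤ m := iSup_norm_nonneg A g
  have hρ : 0 < ‖g x‖ := hm.trans_lt hlt
  obtain ⟨M, hM⟩ := hA'.exists_bound_of_continuousOn (hg.continuousOn.mono hAX')
  obtain ⟨N, hN⟩ := exists_pow_lt_of_lt_one (by norm_num : (0 : ℝ) < 1 / 4)
    ((div_lt_one hρ).2 hlt)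
  let c : ℝ := (max M 0 / ‖g x‖) ^ N
  have hc : 0 ≤ c := by positivity
  obtain ⟨h, hh, hhx, hhA, hhA'⟩ := hsep (min (1 / 4) (1 / (2 * (c + 1)))) (by positivity)
  have hd : DifferentiableOn ℂ (fun y => g y / g x) X := by
    simpa only [div_eq_mul_inv] using hg.mul_const (g x)⁻¹
  have hle : ‖(g x / g x) ^ N * h x‖ ≤ 1 / 2 := by
    refine norm_le_of_mem_oHull (g := fun y => (g y / g x) ^ N * h y) hx
      ((hd.pow N).mul hh) (by norm_num) ?_
    rintro y (hy | hy) <;> rw [norm_mul, norm_pow, norm_div]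
    · have h1 : (‖g y‖ / ‖g x‖) ^ N ≤ 1 / 4 := (pow_le_pow_left₀ (by positivity)
        (div_le_div_of_nonneg_right (norm_le_iSup_norm hA hAX hg hy) hρ.le) N).trans hN.le
      have h2 : ‖h y‖ ≤ 5 / 4 := by
        have h3 := (hhA y hy).trans_le (min_le_left _ _)
        have h4 := norm_le_norm_add_norm_sub' (h y) 1
        rw [norm_one] at h4
        linarith
      nlinarith [norm_nonneg (h y)]
    · have h1 : (‖g y‖ / ‖g x‖) ^ N ≤ c := pow_le_pow_left₀ (by positivity)
        (div_le_div_of_nonneg_right ((hM y hy).trans (le_max_left M 0)) hρ.le) N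
      have h2 := ((hhA' y hy).trans_le (min_le_right _ _)).le
      refine (mul_le_mul h1 h2 (norm_nonneg _) hc).trans ?_
      rw [mul_one_div, div_le_iff₀ (by positivity)]
      linarith
  rw [div_self (norm_pos_iff.1 hρ), one_pow, one_mul] at hle
  have h3 := hhx.trans_le (min_le_left _ _)
  have h4 := norm_le_norm_add_norm_sub (h x) 1
  rw [norm_one] at h4
  linarith

end Hulls

/-- If `f` maps `A` and `A'` into disjoint compact pieces of an `𝒪(X)`-convex compact set, then the
hull of `A ∪ A'` is the union of the parts lying over the two pieces, each of which lies in the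
corresponding hull. -/
lemma mem_oHull_of_map_mem {m n : ℕ} {S A A' : Set (CSpace m)} {X L L' : Set (CSpace n)}
    (hX : IsOpen X) (hXc : Convex ℝ X) {f : CSpace m → CSpace n} (hf : DifferentiableOn ℂ f S)
    (hfS : MapsTo f S X) (hA : IsCompact A) (hA' : IsCompact A') (hAS : A ⊆ S) (hAS' : A' ⊆ S)
    (hL : IsCompact L) (hL' : IsCompact L') (hLL' : Disjoint L L') (hsub : L ∪ L' ⊆ X)
    (hhull : OHull X (L ∪ L') = L ∪ L') (hfA : MapsTo f A L) (hfA' : MapsTo f A' L')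
    {x : CSpace m} (hx : x ∈ OHull S (A ∪ A')) (hfx : f x ∈ L) : x ∈ OHull S A := by
  refine mem_oHull_of_approx_indicator hA hA' hAS hAS' hx fun ε hε => ?_
  obtain ⟨h, hh, hhL, hhL'⟩ := exists_hol_approx_indicator hX hXc hL hL' hLL' hsub hhull hε
  exact ⟨h ∘ f, hh.comp hf hfS, hhL _ hfx, fun y hy => hhL _ (hfA hy), fun y hy => hhL' _ (hfA' hy)⟩

lemma leftInverse_iterate_of_mapsTo {α : Type*} {S : Set α} {u v : α → α} (hv : MapsTo v S S)
    (h : ∀ x ∈ S, u (v x) = x) (j : ℕ) : ∀ x ∈ S, u^[j] (v^[j] x) = x := by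
  induction j with
  | zero => exact fun x _ => rfl
  | succ j ih =>
    intro x hx
    rw [Function.iterate_succ_apply, Function.iterate_succ_apply', h _ (hv.iterate j hx), ih x hx]

/-- Let `S ⊆ ℂᵐ` and `X ⊆ ℂⁿ` be convex domains and `f : S → X` a holomorphic
map. If `τ` is an automorphism of `X` which is a generalized translation and `σ` is an
automorphism of `S` with `τ ∘ f = f ∘ σ` on `S`, then `σ` is a generalized translation. -/
theorem stmt_15 {m n : ℕ} (S : Set (CSpace m)) (hSopen : IsOpen S) (hSconv : Convex ℝ S)
    (hSne : S.Nonempty)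
    (X : Set (CSpace n)) (hXopen : IsOpen X) (hXconv : Convex ℝ X) (hXne : X.Nonempty)
    (f : CSpace m → CSpace n) (hfdiff : DifferentiableOn ℂ f S) (hfmaps : Set.MapsTo f S X)
    (τ : CSpace n → CSpace n) (hτdiff : DifferentiableOn ℂ τ X) (hτmaps : Set.MapsTo τ X X)
    (hτbij : ∃ τ' : CSpace n → CSpace n, DifferentiableOn ℂ τ' X ∧ Set.MapsTo τ' X X ∧
      (∀ x ∈ X, τ' (τ x) = x) ∧ (∀ x ∈ X, τ (τ' x) = x))
    (hτgen : IsGenTranslation X τ)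
    (σ : CSpace m → CSpace m) (hσdiff : DifferentiableOn ℂ σ S) (hσmaps : Set.MapsTo σ S S)
    (hσbij : ∃ σ' : CSpace m → CSpace m, DifferentiableOn ℂ σ' S ∧ Set.MapsTo σ' S S ∧
      (∀ x ∈ S, σ' (σ x) = x) ∧ (∀ x ∈ S, σ (σ' x) = x))
    (hcomm : ∀ x ∈ S, τ (f x) = f (σ x)) :
    IsGenTranslation S σ := by
  obtain ⟨σ', hσ'diff, hσ'maps, hσ'σ, hσσ'⟩ := hσbij
  intro K hK hKS hKhull
  let L := OHull X (f '' K)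
  have hfK : IsCompact (f '' K) := hK.image_of_continuousOn (hfdiff.continuousOn.mono hKS)
  have hfKX : f '' K ⊆ X := image_subset_iff.2 fun x hx => hfmaps (hKS hx)
  have hL : IsCompact L := isCompact_oHull hXopen hXconv hfK hfKX
  have hLX : L ⊆ X := oHull_subset
  obtain ⟨j, hj, hdisj, hhull⟩ := hτgen L hL hLX (oHull_oHull hXopen hXconv hfK hfKX)
  have hiter : ∀ x ∈ S, τ^[j] (f x) = f (σ^[j] x) := fun x hx => by
    clear hhull hdisj hj
    induction j with
    | zero => rfl
    | succ j ih =>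
      rw [Function.iterate_succ_apply', Function.iterate_succ_apply', ih,
        hcomm _ (hσmaps.iterate j hx)]
  have hσσ'j := leftInverse_iterate_of_mapsTo hσ'maps hσσ' j
  have hσ'σj := leftInverse_iterate_of_mapsTo hσmaps hσ'σ j
  have hτL : IsCompact (τ^[j] '' L) :=
    hL.image_of_continuousOn ((hτdiff.iterate hτmaps j).continuousOn.mono hLX)
  have hτLX : τ^[j] '' L ⊆ X := image_subset_iff.2 fun x hx => hτmaps.iterate j (hLX hx)
  have hσK : IsCompact (σ^[j] '' K) :=
    hK.image_of_continuousOn ((hσdiff.iterate hσmaps j).continuousOn.mono hKS)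
  have hσKS : σ^[j] '' K ⊆ S := image_subset_iff.2 fun x hx => hσmaps.iterate j (hKS hx)
  have hKL : MapsTo f K L := fun x hx => subset_oHull hfK hfKX (mem_image_of_mem f hx)
  have hσKL : MapsTo f (σ^[j] '' K) (τ^[j] '' L) := by
    rintro _ ⟨x, hx, rfl⟩
    exact ⟨f x, hKL hx, hiter x (hKS hx)⟩
  have hLL' : Disjoint (τ^[j] '' L) L := disjoint_iff_inter_eq_empty.2 hdisj
  refine ⟨j, hj, ?_, Subset.antisymm (fun x hx => ?_)
    (subset_oHull (hσK.union hK) (union_subset hσKS hKS))⟩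
  · rw [← disjoint_iff_inter_eq_empty]
    exact Set.disjoint_left.2 fun x hx hx' => Set.disjoint_left.1 hLL' (hσKL hx) (hKL hx')
  · have hfx : f x ∈ OHull X (τ^[j] '' L ∪ L) :=
      map_mem_oHull hfdiff hfmaps (hτL.union hL) (union_subset hτLX hLX)
        (hσKL.union_union hKL) hx
    rw [hhull] at hfx
    rcases hfx with hfx | hfx
    · have h1 : x ∈ OHull S (σ^[j] '' K) :=
        mem_oHull_of_map_mem hXopen hXconv hfdiff hfmaps hσK hK hσKS hKS hτL hL hLL'
          (union_subset hτLX hLX) hhull hσKL hKL hx hfx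
      have h2 : σ'^[j] x ∈ OHull S K :=
        map_mem_oHull (hσ'diff.iterate hσ'maps j) (hσ'maps.iterate j) hK hKS (by
          rintro _ ⟨y, hy, rfl⟩
          rwa [hσ'σj y (hKS hy)]) h1
      rw [hKhull] at h2
      exact Or.inl ⟨_, h2, hσσ'j x hx.1⟩
    · rw [union_comm] at hx hhull
      refine Or.inr (hKhull.subset ?_)
      exact mem_oHull_of_map_mem hXopen hXconv hfdiff hfmaps hK hσK hKS hσKS hL hτL hLL'.symm
        (union_subset hLX hτLX) (by rw [hhull, union_comm]) hKL hσKL hx hfx
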